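/- Let n ≥ 5, p ≥ 1 and s = n/(n−4). Let U = (u_1, …, u_p) be a nonnegative superharmonic C⁴ solution of Δ² u_i = |U|^{s−1} u_i on the punctured unit ball B₁ \ {0} ⊂ ℝ^n. If |U(x)| = o( |x|^{4−n} (−ln|x|)^{(4−n)/4} ) as x → 0 (i.e., lim_{x→0} |x|^{n−4} (−ln|x|)^{(n−4)/4} |U(x)| = 0), then the origin is a removable singularity: U extends to a continuous function on all of B₁. -/

import Mathlib

open MeasureTheory Metric Filter Topology

/-- The Euclidean Laplacian: sum of second partial derivatives. -/
noncomputable def lap {n : ℕ} (u : EuclideanSpace ℝ (Fin n) → ℝ)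
    (x : EuclideanSpace ℝ (Fin n)) : ℝ :=
  ∑ i : Fin n,
    fderiv ℝ (fun y => fderiv ℝ u y (EuclideanSpace.single i 1)) x
      (EuclideanSpace.single i 1)

/-- The bi-Laplacian Δ² = Δ ∘ Δ. -/
noncomputable def bilap {n : ℕ} (u : EuclideanSpace ℝ (Fin n) → ℝ) :
    EuclideanSpace ℝ (Fin n) → ℝ :=
  lap (lap u)

/-- The pointwise Euclidean norm |U(x)| of a p-map U. -/
noncomputable def vnorm {n p : ℕ} (U : Fin p → EuclideanSpace ℝ (Fin n) → ℝ)
    (x : EuclideanSpace ℝ (Fin n)) : ℝ :=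
  Real.sqrt (∑ i, U i x ^ 2)

/-!
With `V = |U| ^ (s - 1)` and `u = ∑ i, U i`, the pair `(u, -Δu)` is a nonnegative subsolution of the
cooperative system `-Δu = w`, `-Δw = V u`, and at the Serrin exponent the decay hypothesis says
exactly that `|x| ^ 4 * log |x|⁻¹ * V` is small.

Write `d` for the dimension. The Laplacian of `|x| ^ (4 - d)` is a multiple of the harmonic function
`|x| ^ (2 - d)`, so that `|x| ^ (4 - d) * (log |x|⁻¹) ^ (-β)` is a strict supersolution thanks to
the logarithm alone. For `β < (d - 4) / 4` it also dominates `u` near the origin, and it dominates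
`-Δu` because an interior estimate on `B(x, |x| / 2)` turns bounds on `u` into bounds on
`|x| ^ 2 * Δu`. Adding an arbitrarily small multiple of it to a multiple of the supersolution
`|x| ^ (-ε)`, the maximum principle yields `u = O(|x| ^ (-ε))` for small `ε > 0`. Now `Δ²u` is only
mildly singular and two comparisons with fundamental solutions bound `Δu` and then `u`. A bounded
function with bounded Laplacian off the origin is Lipschitz near it: compare its difference with its
reflection to barriers on a half ball, the poles being absorbed by multiples of the fundamental
solution.
-/

namespace RemovableSingularity

open InnerProductSpace Laplacian Module Gradient Asymptotics

section LaplacianCalculus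

lemma deriv_deriv_nonpos_of_isLocalMax {f : ℝ → ℝ} {t : ℝ} (hf : ContinuousAt f t)
    (hmax : IsLocalMax f t) : deriv (deriv f) t ≤ 0 := by
  by_contra! hpos
  have hmin : IsLocalMin f t := isLocalMin_of_deriv_deriv_pos hpos hmax.deriv_eq_zero hf
  have hconst : f =ᶠ[𝓝 t] fun _ ↦ f t := by
    filter_upwards [hmax, hmin] with s hs hs' using le_antisymm hs hs'
  have hzero : deriv (deriv f) t = 0 := by simp [hconst.deriv.deriv_eq]
  exact hpos.ne' hzero

variable {E : Type*} [NormedAddCommGroup E]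

section NormedSpace

variable [NormedSpace ℝ E] {u : E → ℝ} {x : E}

lemma differentiableAt_fderiv (hu : ContDiffAt ℝ 2 u x) : DifferentiableAt ℝ (fderiv ℝ u) x :=
  (hu.fderiv_right (m := 1) (by norm_num)).differentiableAt one_ne_zero

lemma eventually_differentiableAt (hu : ContDiffAt ℝ 2 u x) :
    ∀ᶠ y in 𝓝 x, DifferentiableAt ℝ u y :=
  (hu.eventually (by simp)).mono fun _ hy ↦ hy.differentiableAt two_ne_zero

lemma fderiv_fderiv_apply (hu : ContDiffAt ℝ 2 u x) (e e' : E) :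
    fderiv ℝ (fun y ↦ fderiv ℝ u y e) x e' = fderiv ℝ (fderiv ℝ u) x e' e := by
  rw [fderiv_clm_apply (differentiableAt_fderiv hu) (differentiableAt_const e)]
  simp

lemma deriv_deriv_comp_line (hu : ContDiffAt ℝ 2 u x) (e : E) :
    deriv (deriv fun t : ℝ ↦ u (x + t • e)) 0 = fderiv ℝ (fderiv ℝ u) x e e := by
  have hline (t : ℝ) : HasDerivAt (fun t : ℝ ↦ x + t • e) e t := by
    simpa using ((hasDerivAt_id t).smul_const e).const_add x
  have htendsto : Tendsto (fun t : ℝ ↦ x + t • e) (𝓝 0) (𝓝 x) := by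
    simpa using (hline 0).continuousAt.tendsto
  have hderiv : (deriv fun t : ℝ ↦ u (x + t • e)) =ᶠ[𝓝 0] fun t ↦ fderiv ℝ u (x + t • e) e := by
    filter_upwards [htendsto.eventually (eventually_differentiableAt hu)] with t ht
    exact (ht.hasFDerivAt.comp_hasDerivAt t (hline t)).deriv
  have hfderiv : HasFDerivAt (fun y ↦ fderiv ℝ u y e) (fderiv ℝ (fun y ↦ fderiv ℝ u y e) x)
      (x + (0 : ℝ) • e) := by
    simpa using ((differentiableAt_fderiv hu).clm_apply (differentiableAt_const e)).hasFDerivAt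
  rw [hderiv.deriv_eq, ← fderiv_fderiv_apply hu]
  exact (hfderiv.comp_hasDerivAt 0 (hline 0)).deriv

end NormedSpace

variable [InnerProductSpace ℝ E] [FiniteDimensional ℝ E]

lemma laplacian_eq_sum_fderiv_fderiv {ι : Type*} [Fintype ι] (b : OrthonormalBasis ι ℝ E)
    (u : E → ℝ) (x : E) : Δ u x = ∑ i, fderiv ℝ (fderiv ℝ u) x (b i) (b i) := by
  simp only [laplacian_eq_iteratedFDeriv_orthonormalBasis u b, iteratedFDeriv_two_apply,
    Matrix.cons_val_zero, Matrix.cons_val_one]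

lemma contDiffAt_laplacian {u : E → ℝ} {x : E} {k m : WithTop ℕ∞} (hu : ContDiffAt ℝ m u x)
    (hkm : k + 2 ≤ m) : ContDiffAt ℝ k (Δ u) x := by
  have hfderiv : ContDiffAt ℝ (k + 1) (fderiv ℝ u) x :=
    hu.fderiv_right (by rwa [add_assoc, one_add_one_eq_two])
  rw [funext (laplacian_eq_sum_fderiv_fderiv (stdOrthonormalBasis ℝ E) u)]
  exact ContDiffAt.sum fun i _ ↦
    ((hfderiv.fderiv_right le_rfl).clm_apply contDiffAt_const).clm_apply contDiffAt_const

lemma laplacian_finset_sum {ι : Type*} {s : Finset ι} {u : ι → E → ℝ} {x : E}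
    (hu : ∀ i ∈ s, ContDiffAt ℝ 2 (u i) x) :
    Δ (fun y ↦ ∑ i ∈ s, u i y) x = ∑ i ∈ s, Δ (u i) x := by
  simp only [laplacian_eq_iteratedFDeriv_stdOrthonormalBasis]
  rw [Finset.sum_comm, iteratedFDeriv_fun_sum_apply hu]
  simp only [_root_.sum_apply]

lemma laplacian_const_mul {v : E → ℝ} {x : E} (hv : ContDiffAt ℝ 2 v x) (c : ℝ) :
    Δ (fun y ↦ c * v y) x = c * Δ v x :=
  laplacian_smul c hv

lemma laplacian_add_const_mul {u v : E → ℝ} {x : E} (hu : ContDiffAt ℝ 2 u x)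
    (hv : ContDiffAt ℝ 2 v x) (c : ℝ) : Δ (fun y ↦ u y + c * v y) x = Δ u x + c * Δ v x :=
  (hu.laplacian_add (hv.const_smul c)).trans (congrArg (Δ u x + ·) (laplacian_const_mul hv c))

lemma laplacian_sub_const_mul {u v : E → ℝ} {x : E} (hu : ContDiffAt ℝ 2 u x)
    (hv : ContDiffAt ℝ 2 v x) (c : ℝ) : Δ (fun y ↦ u y - c * v y) x = Δ u x - c * Δ v x := by
  simpa [sub_eq_add_neg] using laplacian_add_const_mul hu hv (-c)

lemma laplacian_comp_sub (u : E → ℝ) (c x : E) : Δ (fun y ↦ u (y - c)) x = Δ u (x - c) := by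
  simp only [laplacian_eq_iteratedFDeriv_stdOrthonormalBasis, iteratedFDeriv_comp_sub]

lemma laplacian_comp_linearIsometryEquiv (A : E ≃ₗᵢ[ℝ] E) (u : E → ℝ) (x : E) :
    Δ (fun y ↦ u (A y)) x = Δ u (A x) := by
  have hcomp (b : E) : iteratedFDeriv ℝ 2 (fun y ↦ u (A y)) x ![b, b] =
      iteratedFDeriv ℝ 2 u (A x) ![A b, A b] := by
    have h := A.toContinuousLinearEquiv.iteratedFDerivWithin_comp_right u uniqueDiffOn_univ
      (Set.mem_univ (A x)) 2
    simp only [Set.preimage_univ, iteratedFDerivWithin_univ] at h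
    refine (DFunLike.congr_fun h ![b, b]).trans ?_
    simp only [ContinuousMultilinearMap.compContinuousLinearMap_apply]
    congr 1
    ext i
    fin_cases i <;> rfl
  simp only [laplacian_eq_iteratedFDeriv_stdOrthonormalBasis (fun y ↦ u (A y)), hcomp,
    laplacian_eq_iteratedFDeriv_orthonormalBasis u ((stdOrthonormalBasis ℝ E).map A),
    OrthonormalBasis.map_apply]

lemma laplacian_nonpos_of_isLocalMax {u : E → ℝ} {x : E} (hu : ContDiffAt ℝ 2 u x)
    (hmax : IsLocalMax u x) : Δ u x ≤ 0 := by
  rw [laplacian_eq_sum_fderiv_fderiv (stdOrthonormalBasis ℝ E)]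
  refine Finset.sum_nonpos fun i _ ↦ ?_
  rw [← deriv_deriv_comp_line hu]
  set line : ℝ → E := fun t ↦ x + t • stdOrthonormalBasis ℝ E i
  have hline : ContinuousAt line 0 := by fun_prop
  have hline₀ : line 0 = x := by simp [line]
  rw [← hline₀] at hu hmax
  exact deriv_deriv_nonpos_of_isLocalMax (hu.continuousAt.comp hline)
    (hmax.comp_continuous hline)

lemma laplacian_scalar_comp {F F' : ℝ → ℝ} {F'' : ℝ} {g : E → ℝ} {x : E} (hg : ContDiffAt ℝ 2 g x)
    (hF : ∀ᶠ t in 𝓝 (g x), HasDerivAt F (F' t) t) (hF' : HasDerivAt F' F'' (g x)) :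
    Δ (fun y ↦ F (g y)) x = F'' * ‖∇ g x‖ ^ 2 + F' (g x) * Δ g x := by
  have hgd := eventually_differentiableAt hg
  have hfderiv : fderiv ℝ (fun y ↦ F (g y)) =ᶠ[𝓝 x] fun y ↦ F' (g y) • fderiv ℝ g y := by
    filter_upwards [hgd, hg.continuousAt.eventually hF] with y hgy hFy
    exact (hFy.comp_hasFDerivAt y hgy.hasFDerivAt).fderiv
  have hfderiv₂ := ((hF'.comp_hasFDerivAt x hgd.self_of_nhds.hasFDerivAt).fun_smul
    (differentiableAt_fderiv hg).hasFDerivAt).fderiv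
  have hgrad : ‖∇ g x‖ ^ 2 = ∑ i, fderiv ℝ g x (stdOrthonormalBasis ℝ E i) ^ 2 := by
    simp only [← inner_gradient_left, (stdOrthonormalBasis ℝ E).sum_sq_inner_left]
  simp only [hgrad, laplacian_eq_sum_fderiv_fderiv (stdOrthonormalBasis ℝ E), hfderiv.fderiv_eq,
    Finset.mul_sum, ← Finset.sum_add_distrib]
  refine Finset.sum_congr rfl fun i _ ↦ ?_
  rw [show fderiv ℝ (fun y ↦ F' (g y) • fderiv ℝ g y) x = _ from hfderiv₂]
  simp [Function.comp]
  ring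

lemma laplacian_norm_sq (x : E) : Δ (fun y : E ↦ ‖y‖ ^ 2) x = 2 * finrank ℝ E := by
  have hfderiv₂ : fderiv ℝ (2 • ⇑(innerSL ℝ (E := E))) x = 2 • innerSL ℝ :=
    (2 • innerSL ℝ (E := E)).fderiv
  rw [laplacian_eq_sum_fderiv_fderiv (stdOrthonormalBasis ℝ E), fderiv_norm_sq, hfderiv₂]
  have hb (i) : innerSL ℝ (stdOrthonormalBasis ℝ E i) (stdOrthonormalBasis ℝ E i) = 1 := by
    rw [innerSL_apply_apply, real_inner_self_eq_norm_sq, OrthonormalBasis.norm_eq_one, one_pow]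
  simp [hb, mul_comm]

lemma norm_gradient_norm {x : E} (hx : x ≠ 0) : ‖∇ (fun y : E ↦ ‖y‖) x‖ = 1 := by
  have : Nontrivial E := nontrivial_of_ne x 0 hx
  rw [← (toDual ℝ E).norm_map, toDual_gradient]
  exact norm_fderiv_norm ((contDiffAt_norm (n := 1) ℝ hx).differentiableAt one_ne_zero)

lemma laplacian_norm {x : E} (hx : x ≠ 0) : Δ (fun y : E ↦ ‖y‖) x = (finrank ℝ E - 1) / ‖x‖ := by
  have hnorm : ‖x‖ ≠ 0 := norm_ne_zero_iff.2 hx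
  have hsq := laplacian_scalar_comp (F := fun t ↦ t ^ 2) (contDiffAt_norm ℝ hx)
    (.of_forall fun t ↦ hasDerivAt_pow 2 t) (((hasDerivAt_id ‖x‖).pow 1).const_mul _)
  rw [laplacian_norm_sq, norm_gradient_norm hx] at hsq
  field_simp
  simp at hsq
  linarith

lemma laplacian_comp_norm {F F' : ℝ → ℝ} {F'' : ℝ} {x : E} (hx : x ≠ 0)
    (hF : ∀ᶠ t in 𝓝 ‖x‖, HasDerivAt F (F' t) t) (hF' : HasDerivAt F' F'' ‖x‖) :
    Δ (fun y : E ↦ F ‖y‖) x = F'' + (finrank ℝ E - 1) / ‖x‖ * F' ‖x‖ := by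
  rw [laplacian_scalar_comp (contDiffAt_norm ℝ hx) hF hF', norm_gradient_norm hx, laplacian_norm hx]
  ring

lemma laplacian_norm_rpow (a : ℝ) {x : E} (hx : x ≠ 0) :
    Δ (fun y : E ↦ ‖y‖ ^ a) x = a * (a + finrank ℝ E - 2) * ‖x‖ ^ (a - 2) := by
  have hnorm : 0 < ‖x‖ := norm_pos_iff.2 hx
  have hderiv {b t : ℝ} (ht : 0 < t) : HasDerivAt (fun t : ℝ ↦ t ^ b) (b * t ^ (b - 1)) t :=
    Real.hasDerivAt_rpow_const (.inl ht.ne')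
  rw [laplacian_comp_norm hx ((lt_mem_nhds hnorm).mono fun t ↦ hderiv)
    ((hderiv hnorm).const_mul a), show a - 2 = a - 1 - 1 by ring,
    Real.rpow_sub_one hnorm.ne' (a - 1)]
  field_simp
  ring

lemma laplacian_comp_inner {F F' : ℝ → ℝ} {F'' : ℝ} (e x : E)
    (hF : ∀ t, HasDerivAt F (F' t) t) (hF' : HasDerivAt F' F'' (inner ℝ e x)) :
    Δ (fun y : E ↦ F (inner ℝ e y)) x = F'' * ‖e‖ ^ 2 := by
  have hfderiv : fderiv ℝ (fun y ↦ inner ℝ e y) = fun _ ↦ innerSL ℝ e :=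
    funext fun y ↦ (innerSL ℝ e).fderiv
  have hgrad : ‖∇ (fun y ↦ inner ℝ e y) x‖ = ‖e‖ := by
    rw [← (toDual ℝ E).norm_map, toDual_gradient, hfderiv, innerSL_apply_norm]
  have hlaplacian : Δ (fun y ↦ inner ℝ e y) x = 0 := by
    simp [laplacian_eq_sum_fderiv_fderiv (stdOrthonormalBasis ℝ E), hfderiv]
  have hinner : ContDiffAt ℝ 2 (fun y ↦ inner ℝ e y) x := contDiffAt_const.inner ℝ contDiffAt_id
  rw [laplacian_scalar_comp hinner (.of_forall hF) hF', hgrad, hlaplacian, mul_zero,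
    add_zero]

lemma lap_eq_laplacian {n : ℕ} {u : EuclideanSpace ℝ (Fin n) → ℝ} {x : EuclideanSpace ℝ (Fin n)}
    (hu : ContDiffAt ℝ 2 u x) : lap u x = Δ u x := by
  simp only [laplacian_eq_sum_fderiv_fderiv (EuclideanSpace.basisFun (Fin n) ℝ), lap,
    fderiv_fderiv_apply hu, EuclideanSpace.basisFun_apply]

lemma bilap_eq_laplacian_laplacian {n : ℕ} {u : EuclideanSpace ℝ (Fin n) → ℝ}
    {x : EuclideanSpace ℝ (Fin n)} (hu : ContDiffAt ℝ 4 u x) : bilap u x = Δ (Δ u) x := by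
  have hlap : lap u =ᶠ[𝓝 x] Δ u := by
    filter_upwards [hu.eventually (by simp)] with y hy
    exact lap_eq_laplacian (hy.of_le (by norm_num))
  have hΔ : ContDiffAt ℝ 2 (Δ u) x := contDiffAt_laplacian hu (by norm_num)
  rw [bilap, lap_eq_laplacian (hΔ.congr_of_eventuallyEq hlap),
    (laplacian_congr_nhds hlap).eq_of_nhds]

end LaplacianCalculus

section MaximumPrinciple

lemma le_of_forall_pos_le_mul_add {a b c : ℝ} (h : ∀ δ > 0, a ≤ δ * b + c) : a ≤ c := by
  have hlim : Tendsto (fun δ ↦ δ * b + c) (𝓝[>] 0) (𝓝 c) :=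
    ((Continuous.tendsto' (by fun_prop) 0 c (by simp)).mono_left nhdsWithin_le_nhds)
  exact ge_of_tendsto hlim (eventually_mem_nhdsWithin.mono h)

lemma eventually_forall_norm_sub_le {E : Type*} [NormedAddCommGroup E] {t : Set E} {s : E}
    {p : E → Prop} (h : ∀ᶠ x in 𝓝[t] s, p x) :
    ∀ᶠ r in 𝓝[>] (0 : ℝ), ∀ x ∈ t, ‖x - s‖ ≤ r → p x := by
  obtain ⟨ε, hε, hball⟩ := Metric.eventually_nhds_iff.1 (eventually_nhdsWithin_iff.1 h)
  filter_upwards [Ioo_mem_nhdsGT hε] with r hr x hx hxr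
  exact hball (dist_eq_norm x s ▸ hxr.trans_lt hr.2) hx

lemma frontier_sdiff_subset {X : Type*} [TopologicalSpace X] (s t : Set X) :
    frontier (s \ t) ⊆ frontier s ∪ closure t := fun x hx ↦ by
  rw [Set.sdiff_eq] at hx
  rcases frontier_inter_subset s tᶜ hx with h | h
  · exact .inl h.1
  · exact .inr (frontier_subset_closure (frontier_compl t ▸ h.2))

lemma closure_biUnion_ball_subset {X ι : Type*} [PseudoMetricSpace X] (S : Finset ι) (c : ι → X)
    (r : ℝ) : closure (⋃ i ∈ S, ball (c i) r) ⊆ ⋃ i ∈ S, closedBall (c i) r := by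
  rw [S.closure_biUnion]
  exact Set.iUnion₂_mono fun i _ ↦ closure_ball_subset_closedBall

variable {E : Type*} [NormedAddCommGroup E] [InnerProductSpace ℝ E]

/-- The sum of the fundamental solutions `‖· - s‖ ^ (2 - d)`, up to a constant factor, with poles
at the points `s ∈ S`. -/
noncomputable def poleSum (S : Finset E) (x : E) : ℝ :=
  ∑ s ∈ S, ‖x - s‖ ^ (2 - finrank ℝ E : ℝ)

lemma contDiffAt_norm_rpow (a : ℝ) {x : E} (hx : x ≠ 0) {k : WithTop ℕ∞} :
    ContDiffAt ℝ k (fun y ↦ ‖y‖ ^ a) x :=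
  (contDiffAt_norm ℝ hx).rpow_const_of_ne (norm_ne_zero_iff.2 hx)

lemma norm_rpow_le_poleSum {S : Finset E} {s : E} (hs : s ∈ S) (x : E) :
    ‖x - s‖ ^ (2 - finrank ℝ E : ℝ) ≤ poleSum S x :=
  Finset.single_le_sum (f := fun s ↦ ‖x - s‖ ^ (2 - finrank ℝ E : ℝ))
    (fun _ _ ↦ by positivity) hs

lemma poleSum_nonneg (S : Finset E) (x : E) : 0 ≤ poleSum S x :=
  Finset.sum_nonneg fun _ _ ↦ by positivity

lemma contDiffAt_norm_sub_rpow_of_notMem {S : Finset E} {x : E} (hx : x ∉ S) (a : ℝ) :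
    ∀ s ∈ S, ContDiffAt ℝ 2 (fun y ↦ ‖y - s‖ ^ a) x := fun _ hs ↦
  (contDiffAt_norm_rpow a (sub_ne_zero.2 (ne_of_mem_of_not_mem hs hx).symm)).comp x
    (contDiffAt_id.sub contDiffAt_const)

lemma contDiffAt_poleSum {S : Finset E} {x : E} (hx : x ∉ S) : ContDiffAt ℝ 2 (poleSum S) x :=
  ContDiffAt.sum (contDiffAt_norm_sub_rpow_of_notMem hx _)

variable [FiniteDimensional ℝ E]

lemma nonpos_of_laplacian_nonneg [Nontrivial E] {K : Set E} {q : E → ℝ} (hK : IsCompact K)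
    (hcont : ContinuousOn q K) (hC2 : ∀ x ∈ interior K, ContDiffAt ℝ 2 q x)
    (hΔ : ∀ x ∈ interior K, 0 ≤ Δ q x) (hfrontier : ∀ x ∈ frontier K, q x ≤ 0) :
    ∀ x ∈ K, q x ≤ 0 := by
  intro x hx
  obtain ⟨R, hR⟩ := hK.exists_bound_of_continuousOn (f := fun y : E ↦ ‖y‖ ^ 2) (by fun_prop)
  refine le_of_forall_pos_le_mul_add (b := R) fun ε hε ↦ ?_
  obtain ⟨z, hzK, hmax⟩ := hK.exists_isMaxOn (f := fun y ↦ q y + ε * ‖y‖ ^ 2) ⟨x, hx⟩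
    (by fun_prop)
  have hz : z ∉ interior K := fun hz ↦ by
    have hsq : ContDiffAt ℝ 2 (fun y : E ↦ ‖y‖ ^ 2) z := contDiffAt_id.norm_sq ℝ
    have hΔz := laplacian_nonpos_of_isLocalMax ((hC2 z hz).add (contDiffAt_const.mul hsq))
      (hmax.isLocalMax (mem_interior_iff_mem_nhds.1 hz))
    rw [laplacian_add_const_mul (hC2 z hz) hsq, laplacian_norm_sq] at hΔz
    have hdim : (0 : ℝ) < finrank ℝ E := mod_cast finrank_pos
    have : 0 < ε * (2 * finrank ℝ E) := by positivity
    linarith [hΔ z hz]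
  calc q x ≤ q x + ε * ‖x‖ ^ 2 := le_add_of_nonneg_right (by positivity)
    _ ≤ q z + ε * ‖z‖ ^ 2 := hmax hx
    _ ≤ 0 + ε * R := by
      gcongr
      exacts [hfrontier z ⟨subset_closure hzK, hz⟩, (le_abs_self _).trans (hR z hzK)]
    _ = ε * R + 0 := add_comm _ _

lemma laplacian_poleSum {S : Finset E} {x : E} (hx : x ∉ S) : Δ (poleSum S) x = 0 := by
  unfold poleSum
  rw [laplacian_finset_sum (contDiffAt_norm_sub_rpow_of_notMem hx _)]
  refine Finset.sum_eq_zero fun s hs ↦ ?_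
  rw [laplacian_comp_sub (fun y : E ↦ ‖y‖ ^ (2 - finrank ℝ E : ℝ)) s,
    laplacian_norm_rpow _ (sub_ne_zero.2 (ne_of_mem_of_not_mem hs hx).symm)]
  ring

lemma nonpos_of_laplacian_nonneg_off_poles [Nontrivial E] {K : Set E} {S : Finset E} {q : E → ℝ}
    (hK : IsCompact K) (hcont : ContinuousOn q (K \ S))
    (hC2 : ∀ x ∈ interior K \ S, ContDiffAt ℝ 2 q x) (hΔ : ∀ x ∈ interior K \ S, 0 ≤ Δ q x)
    (hpole : ∀ s ∈ S, ∀ δ > 0, ∀ᶠ x in 𝓝[K \ S] s, q x ≤ δ * ‖x - s‖ ^ (2 - finrank ℝ E : ℝ))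
    (hfrontier : ∀ x ∈ frontier K \ S, q x ≤ 0) : ∀ x ∈ K \ S, q x ≤ 0 := by
  rintro x ⟨hxK, hxS⟩
  refine le_of_forall_pos_le_mul_add (b := poleSum S x) fun δ hδ ↦ ?_
  obtain ⟨r, hr, hrpole, hrx⟩ : ∃ r > 0, (∀ s ∈ S, ∀ y ∈ K \ S, ‖y - s‖ ≤ r →
      q y ≤ δ * ‖y - s‖ ^ (2 - finrank ℝ E : ℝ)) ∧ ∀ s ∈ S, r < ‖x - s‖ := by
    have hclose := (eventually_all_finset S).2 fun s hs ↦
      eventually_forall_norm_sub_le (hpole s hs δ hδ)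
    have hfar : ∀ᶠ r in 𝓝[>] (0 : ℝ), ∀ s ∈ S, r < ‖x - s‖ := (eventually_all_finset S).2
      fun s hs ↦ (gt_mem_nhds (norm_pos_iff.2 (sub_ne_zero.2
        (ne_of_mem_of_not_mem hs hxS).symm))).filter_mono nhdsWithin_le_nhds
    exact (eventually_mem_nhdsWithin.and (hclose.and hfar)).exists
  set K' := K \ ⋃ s ∈ S, ball s r
  have hK' : IsCompact K' := hK.diff (isOpen_biUnion fun s _ ↦ isOpen_ball)
  have hK'S : K' ⊆ K \ S := Set.sdiff_subset_sdiff_right fun s hs ↦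
    Set.mem_biUnion hs (mem_ball_self hr)
  have hint : interior K' ⊆ interior K \ S := fun y hy ↦
    ⟨interior_mono Set.sdiff_subset hy, (hK'S (interior_subset hy)).2⟩
  have hfrontier' (y) (hy : y ∈ frontier K') : q y - δ * poleSum S y ≤ 0 := by
    have hyK' := hK'S (hK'.isClosed.frontier_subset hy)
    refine sub_nonpos.2 ?_
    rcases frontier_sdiff_subset _ _ hy with hyK | hyS'
    · exact (hfrontier y ⟨hyK, hyK'.2⟩).trans (mul_nonneg hδ.le (poleSum_nonneg S y))
    · obtain ⟨s, hs, hys⟩ := Set.mem_iUnion₂.1 (closure_biUnion_ball_subset S id r hyS')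
      calc q y ≤ δ * ‖y - s‖ ^ (2 - finrank ℝ E : ℝ) := hrpole s hs y
            hyK' (mem_closedBall_iff_norm.1 hys)
        _ ≤ δ * poleSum S y := by gcongr; exact norm_rpow_le_poleSum hs y
  have hnonpos := nonpos_of_laplacian_nonneg (q := fun y ↦ q y - δ * poleSum S y) hK'
    ((hcont.mono hK'S).sub fun y hy ↦
      (continuousAt_const.mul (contDiffAt_poleSum (hK'S hy).2).continuousAt).continuousWithinAt)
    (fun y hy ↦ (hC2 y (hint hy)).sub (contDiffAt_const.mul (contDiffAt_poleSum (hint hy).2)))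
    (fun y hy ↦ by
      rw [laplacian_sub_const_mul (hC2 y (hint hy)) (contDiffAt_poleSum (hint hy).2),
        laplacian_poleSum (hint hy).2, mul_zero, sub_zero]
      exact hΔ y (hint hy))
    hfrontier'
  have hxK' : x ∈ K' := ⟨hxK, by simpa [dist_eq_norm] using fun s hs ↦ (hrx s hs).le⟩
  simpa using hnonpos x hxK'

/-- `(u, w)` is a subsolution at `x` of the cooperative system `-Δu = w`, `-Δw = V u`. -/
structure IsSubsolutionAt (V u w : E → ℝ) (x : E) : Prop where
  contDiffAt_fst : ContDiffAt ℝ 2 u x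
  contDiffAt_snd : ContDiffAt ℝ 2 w x
  neg_le_laplacian_fst : -w x ≤ Δ u x
  neg_le_laplacian_snd : -(V x * u x) ≤ Δ w x

/-- `(φ, ψ)` is a positive strict supersolution at `x` of the cooperative system `-Δu = w`,
`-Δw = V u`. -/
structure IsStrictSupersolutionAt (V φ ψ : E → ℝ) (x : E) : Prop where
  contDiffAt_fst : ContDiffAt ℝ 2 φ x
  contDiffAt_snd : ContDiffAt ℝ 2 ψ x
  fst_pos : 0 < φ x
  snd_pos : 0 < ψ x
  laplacian_fst_lt : Δ φ x < -ψ x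
  laplacian_snd_lt : Δ ψ x < -(V x * φ x)

lemma IsStrictSupersolutionAt.const_mul {V φ ψ : E → ℝ} {x : E} {c : ℝ} (hc : 0 < c)
    (h : IsStrictSupersolutionAt V φ ψ x) :
    IsStrictSupersolutionAt V (fun y ↦ c * φ y) (fun y ↦ c * ψ y) x where
  contDiffAt_fst := contDiffAt_const.mul h.contDiffAt_fst
  contDiffAt_snd := contDiffAt_const.mul h.contDiffAt_snd
  fst_pos := mul_pos hc h.fst_pos
  snd_pos := mul_pos hc h.snd_pos
  laplacian_fst_lt := by
    rw [laplacian_const_mul h.contDiffAt_fst]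
    linarith [mul_lt_mul_of_pos_left h.laplacian_fst_lt hc]
  laplacian_snd_lt := by
    rw [laplacian_const_mul h.contDiffAt_snd]
    linarith [mul_lt_mul_of_pos_left h.laplacian_snd_lt hc]

lemma IsStrictSupersolutionAt.add {V φ ψ φ' ψ' : E → ℝ} {x : E}
    (h : IsStrictSupersolutionAt V φ ψ x) (h' : IsStrictSupersolutionAt V φ' ψ' x) :
    IsStrictSupersolutionAt V (φ + φ') (ψ + ψ') x where
  contDiffAt_fst := h.contDiffAt_fst.add h'.contDiffAt_fst
  contDiffAt_snd := h.contDiffAt_snd.add h'.contDiffAt_snd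
  fst_pos := add_pos h.fst_pos h'.fst_pos
  snd_pos := add_pos h.snd_pos h'.snd_pos
  laplacian_fst_lt := by
    rw [h.contDiffAt_fst.laplacian_add h'.contDiffAt_fst, Pi.add_apply]
    linarith [h.laplacian_fst_lt, h'.laplacian_fst_lt]
  laplacian_snd_lt := by
    rw [h.contDiffAt_snd.laplacian_add h'.contDiffAt_snd, Pi.add_apply]
    linarith [h.laplacian_snd_lt, h'.laplacian_snd_lt]

lemma laplacian_le_mul_of_eventually_le {u φ : E → ℝ} {κ : ℝ} {x : E} (hu : ContDiffAt ℝ 2 u x)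
    (hφ : ContDiffAt ℝ 2 φ x) (hle : ∀ᶠ y in 𝓝 x, u y ≤ κ * φ y) (heq : u x = κ * φ x) :
    Δ u x ≤ κ * Δ φ x := by
  have hmax : IsLocalMax (fun y ↦ u y - κ * φ y) x := by
    filter_upwards [hle] with y hy
    linarith
  have hΔ := laplacian_nonpos_of_isLocalMax (hu.sub (contDiffAt_const.mul hφ)) hmax
  rw [laplacian_sub_const_mul hu hφ] at hΔ
  linarith

lemma IsSubsolutionAt.ne_of_eventually_le {V u w φ ψ : E → ℝ} {κ : ℝ} {x : E} (hV : 0 ≤ V x)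
    (hκ : 0 < κ) (hsub : IsSubsolutionAt V u w x) (hsup : IsStrictSupersolutionAt V φ ψ x)
    (hu : ∀ᶠ y in 𝓝 x, u y ≤ κ * φ y) (hw : ∀ᶠ y in 𝓝 x, w y ≤ κ * ψ y) :
    u x ≠ κ * φ x ∧ w x ≠ κ * ψ x := by
  constructor <;> intro heq
  · have := laplacian_le_mul_of_eventually_le hsub.contDiffAt_fst hsup.contDiffAt_fst hu heq
    linarith [hsub.neg_le_laplacian_fst, hw.self_of_nhds,
      mul_lt_mul_of_pos_left hsup.laplacian_fst_lt hκ]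
  · have := laplacian_le_mul_of_eventually_le hsub.contDiffAt_snd hsup.contDiffAt_snd hw heq
    linarith [hsub.neg_le_laplacian_snd, mul_le_mul_of_nonneg_left hu.self_of_nhds hV,
      mul_lt_mul_of_pos_left hsup.laplacian_snd_lt hκ]

theorem IsSubsolutionAt.le_of_le_on_frontier {K : Set E} {V u w φ ψ : E → ℝ} (hK : IsCompact K)
    (hV : ∀ x ∈ K, 0 ≤ V x) (hsub : ∀ x ∈ K, IsSubsolutionAt V u w x)
    (hsup : ∀ x ∈ K, IsStrictSupersolutionAt V φ ψ x)
    (hfrontier : ∀ x ∈ frontier K, u x ≤ φ x ∧ w x ≤ ψ x) :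
    ∀ x ∈ K, u x ≤ φ x ∧ w x ≤ ψ x := by
  intro x hx
  have hcont {f : E → ℝ} (hf : ∀ y ∈ K, ContDiffAt ℝ 2 f y) : ContinuousOn f K :=
    fun y hy ↦ (hf y hy).continuousAt.continuousWithinAt
  have hratio : ContinuousOn (fun y ↦ max (u y / φ y) (w y / ψ y)) K := ContinuousOn.sup
    ((hcont fun y hy ↦ (hsub y hy).contDiffAt_fst).div
      (hcont fun y hy ↦ (hsup y hy).contDiffAt_fst) fun y hy ↦ (hsup y hy).fst_pos.ne')
    ((hcont fun y hy ↦ (hsub y hy).contDiffAt_snd).div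
      (hcont fun y hy ↦ (hsup y hy).contDiffAt_snd) fun y hy ↦ (hsup y hy).snd_pos.ne')
  obtain ⟨z, hzK, hmax⟩ := hK.exists_isMaxOn ⟨x, hx⟩ hratio
  set κ := max (u z / φ z) (w z / ψ z)
  have hle (y) (hy : y ∈ K) : u y ≤ κ * φ y ∧ w y ≤ κ * ψ y :=
    ⟨(div_le_iff₀ (hsup y hy).fst_pos).1 ((le_max_left _ _).trans (hmax hy)),
      (div_le_iff₀ (hsup y hy).snd_pos).1 ((le_max_right _ _).trans (hmax hy))⟩
  suffices hκ : κ ≤ 1 from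
    ⟨(hle x hx).1.trans (mul_le_of_le_one_left (hsup x hx).fst_pos.le hκ),
      (hle x hx).2.trans (mul_le_of_le_one_left (hsup x hx).snd_pos.le hκ)⟩
  by_contra! hκ
  have hz : z ∈ interior K := by
    by_contra hz
    obtain ⟨huz, hwz⟩ := hfrontier z ⟨subset_closure hzK, hz⟩
    exact hκ.not_ge (max_le (div_le_one_of_le₀ huz (hsup z hzK).fst_pos.le)
      (div_le_one_of_le₀ hwz (hsup z hzK).snd_pos.le))
  have hnhds : K ∈ 𝓝 z := mem_interior_iff_mem_nhds.1 hz
  obtain ⟨hne, hne'⟩ := (hsub z hzK).ne_of_eventually_le (hV z hzK) (zero_lt_one.trans hκ)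
    (hsup z hzK) (mem_of_superset hnhds fun y hy ↦ (hle y hy).1)
    (mem_of_superset hnhds fun y hy ↦ (hle y hy).2)
  rcases max_choice (u z / φ z) (w z / ψ z) with h | h
  · exact hne (((eq_div_iff (hsup z hzK).fst_pos.ne').1 h).symm)
  · exact hne' (((eq_div_iff (hsup z hzK).snd_pos.ne').1 h).symm)

end MaximumPrinciple

section GradientEstimate

lemma eventually_le_mul_norm_sub_rpow {E : Type*} [NormedAddCommGroup E] {a δ : ℝ} (ha : a < 0)
    (N : ℝ) (hδ : 0 < δ) (s : E) :
    ∀ᶠ x in 𝓝[≠] s, N ≤ δ * ‖x - s‖ ^ a := by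
  have hnorm : Tendsto (fun x ↦ ‖x - s‖) (𝓝[≠] s) (𝓝[>] 0) := tendsto_norm_sub_self_nhdsNE s
  have hrpow : Tendsto (fun t : ℝ ↦ t ^ a) (𝓝[>] 0) atTop :=
    tendsto_rpow_neg_nhdsGT_zero ha
  exact ((hrpow.comp hnorm).const_mul_atTop hδ).eventually_ge_atTop N

variable {E : Type*} [NormedAddCommGroup E] [InnerProductSpace ℝ E]

/-- A barrier on the half ball `‖z‖ ≤ r`, `0 ≤ ⟪e, z⟫`, with Laplacian `-2 * F`. It is at least `N`
on the spherical part of the boundary and grows linearly in `⟪e, z⟫` along the axis `ℝ e`. -/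
noncomputable def halfBallBarrier (e : E) (r N F : ℝ) (z : E) : ℝ :=
  (finrank ℝ E * (N / r ^ 2) + F) * (r * inner ℝ e z - inner ℝ e z ^ 2) + N / r ^ 2 * ‖z‖ ^ 2

lemma contDiff_halfBallBarrier (e : E) (r N F : ℝ) {k : WithTop ℕ∞} :
    ContDiff ℝ k (halfBallBarrier e r N F) := by
  have hinner : ContDiff ℝ k (fun z ↦ inner ℝ e z) := contDiff_const.inner ℝ contDiff_id
  have hnorm : ContDiff ℝ k (fun z : E ↦ ‖z‖ ^ 2) := contDiff_norm_sq ℝ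
  unfold halfBallBarrier
  fun_prop

lemma mul_norm_sq_le_halfBallBarrier {e : E} {r N F : ℝ} {z : E} (he : ‖e‖ = 1) (hN : 0 ≤ N)
    (hF : 0 ≤ F) (hz : ‖z‖ ≤ r) (hez : 0 ≤ inner ℝ e z) :
    N / r ^ 2 * ‖z‖ ^ 2 ≤ halfBallBarrier e r N F z := by
  have hinner : inner ℝ e z ≤ r := (real_inner_le_norm e z).trans (by rwa [he, one_mul])
  refine le_add_of_nonneg_left (mul_nonneg (by positivity) ?_)
  nlinarith

lemma halfBallBarrier_smul_le {e : E} {r N F t : ℝ} (he : ‖e‖ = 1) (hr : 0 < r) (hN : 0 ≤ N)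
    (hF : 0 ≤ F) (ht : 0 ≤ t) (htr : t ≤ r) :
    halfBallBarrier e r N F (t • e) ≤ ((finrank ℝ E + 1) * N / r + F * r) * t := by
  have hinner : inner ℝ e (t • e) = t := by
    rw [inner_smul_right, real_inner_self_eq_norm_sq, he, one_pow, mul_one]
  have hnorm : ‖t • e‖ = t := by rw [norm_smul, he, mul_one, Real.norm_of_nonneg ht]
  rw [halfBallBarrier, hinner, hnorm]
  calc (finrank ℝ E * (N / r ^ 2) + F) * (r * t - t ^ 2) + N / r ^ 2 * t ^ 2
      ≤ (finrank ℝ E * (N / r ^ 2) + F) * (r * t) + N / r ^ 2 * (r * t) := by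
        gcongr <;> nlinarith
    _ = ((finrank ℝ E + 1) * N / r + F * r) * t := by field_simp; ring

/-- The reflection in the hyperplane orthogonal to `e`. -/
noncomputable def hyperplaneReflection (e : E) : E ≃ₗᵢ[ℝ] E := (ℝ ∙ e)ᗮ.reflection

lemma hyperplaneReflection_self (e : E) : hyperplaneReflection e e = -e :=
  Submodule.reflection_orthogonalComplement_singleton_eq_neg e

lemma hyperplaneReflection_hyperplaneReflection (e z : E) :
    hyperplaneReflection e (hyperplaneReflection e z) = z :=
  Submodule.reflection_reflection _ z

lemma mem_image_hyperplaneReflection [DecidableEq E] {S : Finset E} {e z : E} :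
    z ∈ S.image (hyperplaneReflection e) ↔ hyperplaneReflection e z ∈ S := by
  have hinv := hyperplaneReflection_hyperplaneReflection e
  exact Finset.mem_image.trans
    ⟨fun ⟨y, hy, hyz⟩ ↦ hyz ▸ (hinv y).symm ▸ hy, fun hz ↦ ⟨_, hz, hinv z⟩⟩

lemma hyperplaneReflection_eq_self {e z : E} (hez : inner ℝ e z = 0) :
    hyperplaneReflection e z = z :=
  Submodule.reflection_mem_subspace_eq_self
    (Submodule.mem_orthogonal_singleton_iff_inner_right.2 hez)

lemma norm_eq_or_inner_eq_zero_of_mem_frontier {e z : E} {r : ℝ}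
    (hz : z ∈ frontier (closedBall 0 r ∩ {z | 0 ≤ inner ℝ e z})) :
    ‖z‖ = r ∨ inner ℝ e z = 0 := by
  rcases frontier_inter_subset _ _ hz with h | h
  · exact .inl (mem_sphere_zero_iff_norm.1 (frontier_closedBall_subset_sphere h.1))
  · exact .inr (frontier_le_subset_eq continuous_const (by fun_prop) h.2).symm

variable [FiniteDimensional ℝ E]

lemma laplacian_halfBallBarrier {e : E} (he : ‖e‖ = 1) (r N F : ℝ) (z : E) :
    Δ (halfBallBarrier e r N F) z = -2 * F := by
  have hinner : ContDiffAt ℝ 2 (fun z ↦ inner ℝ e z) z := contDiffAt_const.inner ℝ contDiffAt_id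
  have hparabola : Δ (fun z ↦ (finrank ℝ E * (N / r ^ 2) + F) *
      (r * inner ℝ e z - inner ℝ e z ^ 2)) z = (finrank ℝ E * (N / r ^ 2) + F) * -2 := by
    have hF (t : ℝ) : HasDerivAt (fun t ↦ (finrank ℝ E * (N / r ^ 2) + F) * (r * t - t ^ 2))
        ((finrank ℝ E * (N / r ^ 2) + F) * (r - 2 * t)) t := by
      simpa using (((hasDerivAt_id t).const_mul r).sub (hasDerivAt_pow 2 t)).const_mul _
    have hF' : HasDerivAt (fun t ↦ (finrank ℝ E * (N / r ^ 2) + F) * (r - 2 * t))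
        ((finrank ℝ E * (N / r ^ 2) + F) * -2) (inner ℝ e z) := by
      simpa using (((hasDerivAt_id (inner ℝ e z)).const_mul 2).const_sub r).const_mul _
    rw [laplacian_comp_inner e z hF hF', he, one_pow, mul_one]
  unfold halfBallBarrier
  rw [laplacian_add_const_mul (by fun_prop) (contDiff_norm_sq ℝ).contDiffAt, hparabola,
    laplacian_norm_sq]
  ring

lemma le_halfBallBarrier {w : E → ℝ} {P : Finset E} {r N F : ℝ} {e : E} (hd : 2 < finrank ℝ E)
    (he : ‖e‖ = 1) (hr : 0 < r) (hN : 0 ≤ N) (hF : 0 ≤ F)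
    (hC2 : ∀ z ∈ (closedBall 0 r ∩ {z | 0 ≤ inner ℝ e z}) \ P, ContDiffAt ℝ 2 w z)
    (hΔ : ∀ z ∈ (closedBall 0 r ∩ {z | 0 ≤ inner ℝ e z}) \ P, -2 * F ≤ Δ w z)
    (hwN : ∀ z ∈ (closedBall 0 r ∩ {z | 0 ≤ inner ℝ e z}) \ P, w z ≤ N)
    (hw0 : ∀ z, inner ℝ e z = 0 → w z ≤ 0) :
    ∀ z ∈ (closedBall 0 r ∩ {z | 0 ≤ inner ℝ e z}) \ P, w z ≤ halfBallBarrier e r N F z := by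
  have : Nontrivial E := nontrivial_of_ne e 0 (norm_ne_zero_iff.1 (by simp [he]))
  set K := closedBall (0 : E) r ∩ {z | 0 ≤ inner ℝ e z}
  set h := halfBallBarrier e r N F
  have hK : IsCompact K := (isCompact_closedBall 0 r).inter_right
    (isClosed_le continuous_const (by fun_prop))
  have hh {z : E} (hz : z ∈ K) : N / r ^ 2 * ‖z‖ ^ 2 ≤ h z :=
    mul_norm_sq_le_halfBallBarrier he hN hF (mem_closedBall_zero_iff.1 hz.1) hz.2
  have hhC2 : ContDiff ℝ 2 h := contDiff_halfBallBarrier e r N F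
  have hqC2 (z) (hz : z ∈ K \ P) : ContDiffAt ℝ 2 (fun z ↦ w z - 1 * h z) z :=
    (hC2 z hz).sub (contDiffAt_const.mul hhC2.contDiffAt)
  have hint {z : E} (hz : z ∈ interior K \ P) : z ∈ K \ P := ⟨interior_subset hz.1, hz.2⟩
  have hd' : (2 - finrank ℝ E : ℝ) < 0 := sub_neg.2 (mod_cast hd)
  have hq := nonpos_of_laplacian_nonneg_off_poles (q := fun z ↦ w z - 1 * h z) hK
    (fun z hz ↦ (hqC2 z hz).continuousAt.continuousWithinAt) (fun z hz ↦ hqC2 z (hint hz))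
    (fun z hz ↦ by
      rw [laplacian_sub_const_mul (hC2 z (hint hz)) hhC2.contDiffAt, laplacian_halfBallBarrier he]
      linarith [hΔ z (hint hz)])
    (fun s hs δ hδ ↦ by
      have hne : K \ P ⊆ {s}ᶜ := fun z hz ↦ (ne_of_mem_of_not_mem hs hz.2).symm
      filter_upwards [nhdsWithin_mono s hne (eventually_le_mul_norm_sub_rpow hd' N hδ s),
        self_mem_nhdsWithin] with z hNz hz
      linarith [hwN z hz, hh hz.1, show 0 ≤ N / r ^ 2 * ‖z‖ ^ 2 by positivity])
    (fun z hz ↦ by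
      have hzK : z ∈ K := hK.isClosed.frontier_subset hz.1
      have hhz := hh hzK
      rcases norm_eq_or_inner_eq_zero_of_mem_frontier hz.1 with hzr | hez
      · rw [hzr, div_mul_cancel₀ N (by positivity)] at hhz
        linarith [hwN z ⟨hzK, hz.2⟩]
      · linarith [hw0 z hez, show 0 ≤ N / r ^ 2 * ‖z‖ ^ 2 by positivity])
  intro z hz
  linarith [hq z hz]

lemma sub_apply_neg_le_of_abs_laplacian_le {v : E → ℝ} {S : Finset E} {r N F t : ℝ} {e : E}
    (hd : 2 < finrank ℝ E) (he : ‖e‖ = 1)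
    (hC2 : ∀ z ∈ closedBall 0 r \ S, ContDiffAt ℝ 2 v z)
    (hv : ∀ z ∈ closedBall 0 r \ S, v z ∈ Set.Icc 0 N)
    (hΔ : ∀ z ∈ closedBall 0 r \ S, |Δ v z| ≤ F) (hr : 0 < r) (ht : 0 ≤ t) (htr : t ≤ r)
    (hte : t • e ∉ S) (hte' : -(t • e) ∉ S) :
    v (t • e) - v (-(t • e)) ≤ ((finrank ℝ E + 1) * N / r + F * r) * t := by
  classical
  set σ := hyperplaneReflection e
  set K := closedBall (0 : E) r ∩ {z | 0 ≤ inner ℝ e z}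
  set P := S ∪ S.image σ
  have hP {z : E} : z ∉ P ↔ z ∉ S ∧ σ z ∉ S := by
    rw [Finset.mem_union, mem_image_hyperplaneReflection, not_or]
  have hmem {z : E} (hz : z ∈ K \ P) : z ∈ closedBall 0 r \ (S : Set E) ∧
      σ z ∈ closedBall 0 r \ (S : Set E) :=
    ⟨⟨hz.1.1, (hP.1 hz.2).1⟩, by simpa using hz.1.1, (hP.1 hz.2).2⟩
  have hσte : σ (t • e) = -(t • e) := by
    rw [map_smul, hyperplaneReflection_self, smul_neg]
  have hteK : t • e ∈ K \ P := by
    refine ⟨⟨?_, ?_⟩, hP.2 ⟨hte, hσte ▸ hte'⟩⟩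
    · rwa [mem_closedBall_zero_iff, norm_smul, he, mul_one, Real.norm_of_nonneg ht]
    · rw [Set.mem_ofPred_eq, inner_smul_right]
      exact mul_nonneg ht real_inner_self_nonneg
  have hN : 0 ≤ N := (hv _ (hmem hteK).1).1.trans (hv _ (hmem hteK).1).2
  have hF : 0 ≤ F := (abs_nonneg _).trans (hΔ _ (hmem hteK).1)
  have hvσ {z : E} (hz : z ∈ K \ P) : ContDiffAt ℝ 2 (fun y ↦ v (σ y)) z :=
    (hC2 _ (hmem hz).2).comp z σ.contDiff.contDiffAt
  have hle := le_halfBallBarrier (w := fun z ↦ v z - 1 * v (σ z)) hd he hr hN hF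
    (fun z hz ↦ (hC2 z (hmem hz).1).sub (contDiffAt_const.mul (hvσ hz)))
    (fun z hz ↦ by
      rw [laplacian_sub_const_mul (hC2 z (hmem hz).1) (hvσ hz),
        laplacian_comp_linearIsometryEquiv]
      linarith [abs_le.1 (hΔ z (hmem hz).1), abs_le.1 (hΔ _ (hmem hz).2)])
    (fun z hz ↦ by linarith [(hv z (hmem hz).1).2, (hv _ (hmem hz).2).1])
    (fun z hz ↦ by simp [σ, hyperplaneReflection_eq_self hz]) (t • e) hteK
  rw [one_mul, hσte] at hle
  exact hle.trans (halfBallBarrier_smul_le he hr hN hF ht htr)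

theorem sub_le_of_abs_laplacian_le {v : E → ℝ} {S : Finset E} {r N F : ℝ} {x y : E}
    (hd : 2 < finrank ℝ E) (hr : 0 < r)
    (hC2 : ∀ z ∈ closedBall (midpoint ℝ x y) r \ S, ContDiffAt ℝ 2 v z)
    (hv : ∀ z ∈ closedBall (midpoint ℝ x y) r \ S, v z ∈ Set.Icc 0 N)
    (hΔ : ∀ z ∈ closedBall (midpoint ℝ x y) r \ S, |Δ v z| ≤ F) (hx : x ∉ S) (hy : y ∉ S)
    (hxy : ‖x - y‖ ≤ 2 * r) :
    v x - v y ≤ ((finrank ℝ E + 1) * N / r + F * r) / 2 * ‖x - y‖ := by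
  classical
  rcases eq_or_ne x y with rfl | hne
  · simp
  set m := midpoint ℝ x y
  have hpos : 0 < ‖x - y‖ := norm_sub_pos_iff.2 hne
  set e := ‖x - y‖⁻¹ • (x - y)
  have he : (‖x - y‖ / 2) • e = (2⁻¹ : ℝ) • (x - y) := by
    rw [smul_smul]; field_simp
  have hxm : (‖x - y‖ / 2) • e = x - m := by rw [he, left_sub_midpoint, invOf_eq_inv]
  have hym : -((‖x - y‖ / 2) • e) = y - m := by
    rw [he, right_sub_midpoint, invOf_eq_inv, ← smul_neg, neg_sub]
  set S' : Finset E := S.image (· - m)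
  have hS' {z : E} : z ∈ S' ↔ z + m ∈ S := by simp [S', Finset.mem_image, sub_eq_iff_eq_add]
  have hmem (z : E) (hz : z ∈ closedBall 0 r \ S') : z + m ∈ closedBall m r \ S :=
    ⟨by simpa using hz.1, fun h ↦ hz.2 (hS'.2 h)⟩
  have hsub := sub_apply_neg_le_of_abs_laplacian_le (v := fun z ↦ v (z + m)) (S := S') (e := e) hd
    (norm_smul_inv_norm (𝕜 := ℝ) (sub_ne_zero.2 hne))
    (fun z hz ↦ (hC2 _ (hmem z hz)).comp z (contDiffAt_id.add contDiffAt_const))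
    (fun z hz ↦ hv _ (hmem z hz))
    (fun z hz ↦ by
      rw [show Δ (fun z ↦ v (z + m)) z = Δ v (z + m) by simpa using laplacian_comp_sub v (-m) z]
      exact hΔ _ (hmem z hz))
    hr (t := ‖x - y‖ / 2) (by positivity) (by linarith)
    (by rwa [hxm, hS', sub_add_cancel]) (by rwa [hym, hS', sub_add_cancel])
  rw [hym, hxm] at hsub
  simp only [sub_add_cancel] at hsub
  linarith

end GradientEstimate

section LaplacianEstimate

variable {E : Type*} [NormedAddCommGroup E] [InnerProductSpace ℝ E]
variable [FiniteDimensional ℝ E]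

lemma exists_closedBall_le_four_mul {w : E → ℝ} {x₀ : E} {R : ℝ} (hR : 0 ≤ R)
    (hcont : ContinuousOn w (closedBall x₀ R)) (hw : ∀ z ∈ closedBall x₀ R, 0 ≤ w z) :
    ∃ x₁, ∃ ρ ∈ Set.Icc 0 R, closedBall x₁ ρ ⊆ closedBall x₀ R ∧ w x₀ * R ^ 2 ≤ w x₁ * ρ ^ 2 ∧
      ∀ z ∈ closedBall x₁ (ρ / 2), w z ≤ 4 * w x₁ := by
  -- Maximizing `w` weighted by the square of the distance to the sphere makes `w` comparable to
  -- its value at the maximum point on a ball reaching halfway to the sphere.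
  obtain ⟨x₁, hx₁, hmax⟩ := (isCompact_closedBall x₀ R).exists_isMaxOn
    (f := fun z ↦ w z * (R - dist z x₀) ^ 2) ⟨x₀, mem_closedBall_self hR⟩ (by fun_prop)
  have hmax₀ := hmax (mem_closedBall_self hR)
  simp only [Set.mem_ofPred_eq, dist_self, sub_zero] at hmax₀
  set ρ := R - dist x₁ x₀
  have hρ : 0 ≤ ρ := sub_nonneg.2 hx₁
  have hsub : closedBall x₁ ρ ⊆ closedBall x₀ R :=
    closedBall_subset_closedBall' (sub_add_cancel _ _).le
  refine ⟨x₁, ρ, ⟨hρ, sub_le_self _ dist_nonneg⟩, hsub, hmax₀, fun z hz ↦ ?_⟩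
  have hzR : z ∈ closedBall x₀ R := hsub (closedBall_subset_closedBall (half_le_self hρ) hz)
  rcases hρ.eq_or_lt with hρ0 | hρpos
  · obtain rfl : z = x₁ := by simpa [← hρ0] using hz
    linarith [hw z hzR]
  have hdist : ρ / 2 ≤ R - dist z x₀ := by
    linarith [dist_triangle z x₁ x₀, mem_closedBall.1 hz]
  have hle : w z * (ρ / 2) ^ 2 ≤ w x₁ * ρ ^ 2 := calc
    w z * (ρ / 2) ^ 2 ≤ w z * (R - dist z x₀) ^ 2 := by gcongr; exact hw z hzR
    _ ≤ w x₁ * ρ ^ 2 := hmax hzR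
  refine le_of_mul_le_mul_right ?_ (sq_pos_of_pos hρpos)
  linarith

lemma le_of_laplacian_le_neg [Nontrivial E] {u : E → ℝ} {x : E} {a r : ℝ} (hr : 0 ≤ r)
    (hC2 : ∀ z ∈ closedBall x r, ContDiffAt ℝ 2 u z) (hu : ∀ z ∈ closedBall x r, 0 ≤ u z)
    (hΔ : ∀ z ∈ closedBall x r, Δ u z ≤ -a) : a * r ^ 2 / (2 * finrank ℝ E) ≤ u x := by
  set c := a / (2 * finrank ℝ E)
  have hdim : (0 : ℝ) < finrank ℝ E := mod_cast finrank_pos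
  have hsq (z : E) : ContDiffAt ℝ 2 (fun y ↦ ‖y - x‖ ^ 2) z :=
    (contDiffAt_id.sub contDiffAt_const).norm_sq ℝ
  have hparabola (z : E) : ContDiffAt ℝ 2 (fun y ↦ c * r ^ 2 - c * ‖y - x‖ ^ 2) z :=
    contDiffAt_const.sub (contDiffAt_const.mul (hsq z))
  have hΔparabola (z : E) : Δ (fun y ↦ c * r ^ 2 - c * ‖y - x‖ ^ 2) z = -a := by
    rw [laplacian_sub_const_mul contDiffAt_const (hsq z),
      laplacian_comp_sub (fun y ↦ ‖y‖ ^ 2), laplacian_norm_sq, laplacian_const]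
    simp only [c, Pi.zero_apply]
    field_simp
    ring
  have hq := nonpos_of_laplacian_nonneg (K := closedBall x r)
    (q := fun z ↦ c * r ^ 2 - c * ‖z - x‖ ^ 2 - 1 * u z) (isCompact_closedBall x r)
    (fun z hz ↦ ((hparabola z).sub (contDiffAt_const.mul
      (hC2 z hz))).continuousAt.continuousWithinAt)
    (fun z hz ↦ (hparabola z).sub (contDiffAt_const.mul (hC2 z (interior_subset hz))))
    (fun z hz ↦ by
      rw [laplacian_sub_const_mul (hparabola z) (hC2 z (interior_subset hz)), hΔparabola]
      linarith [hΔ z (interior_subset hz)])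
    (fun z hz ↦ by
      rw [mem_sphere_iff_norm.1 (frontier_closedBall_subset_sphere hz)]
      linarith [hu z (isClosed_closedBall.frontier_subset hz)])
    x (mem_closedBall_self hr)
  calc a * r ^ 2 / (2 * finrank ℝ E) = c * r ^ 2 := by ring
    _ ≤ u x := by simpa using hq

lemma half_le_of_abs_laplacian_le {w : E → ℝ} {x : E} {ρ F : ℝ} (hd : 2 < finrank ℝ E)
    (hC2 : ∀ z ∈ closedBall x ρ, ContDiffAt ℝ 2 w z) (hw : ∀ z ∈ closedBall x ρ, 0 ≤ w z)
    (hw4 : ∀ z ∈ closedBall x (ρ / 2), w z ≤ 4 * w x) (hΔ : ∀ z ∈ closedBall x ρ, |Δ w z| ≤ F)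
    (hρ : 0 < ρ) (hF : F * ρ ^ 2 ≤ w x) :
    ∀ z ∈ closedBall x (ρ / (32 * (finrank ℝ E + 1))), w x / 2 ≤ w z := by
  intro z hz
  set d := (finrank ℝ E : ℝ)
  have hd0 : 0 ≤ d := Nat.cast_nonneg _
  have hwx : 0 ≤ w x := hw x (mem_closedBall_self hρ.le)
  have hzx : ‖x - z‖ ≤ ρ / (32 * (d + 1)) := by rwa [← mem_closedBall_iff_norm']
  have hθ : ρ / (32 * (d + 1)) ≤ ρ / 32 := by gcongr; linarith
  have hsub : closedBall (midpoint ℝ x z) (ρ / 4) ⊆ closedBall x (ρ / 2) := by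
    refine closedBall_subset_closedBall' ?_
    rw [dist_midpoint_left, dist_eq_norm]
    norm_num
    linarith
  have hsub' := hsub.trans (closedBall_subset_closedBall (half_le_self hρ.le))
  have hlip := sub_le_of_abs_laplacian_le (v := w) (S := ∅) (N := 4 * w x) (F := F) (x := x)
    (y := z) (r := ρ / 4) hd (by positivity) (fun y hy ↦ hC2 y (hsub' hy.1))
    (fun y hy ↦ ⟨hw y (hsub' hy.1), hw4 y (hsub hy.1)⟩) (fun y hy ↦ hΔ y (hsub' hy.1))
    (Finset.notMem_empty x) (Finset.notMem_empty z) (by linarith)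
  have hF0 : 0 ≤ F := (abs_nonneg _).trans (hΔ x (mem_closedBall_self hρ.le))
  have hstep : ((d + 1) * (4 * w x) / (ρ / 4) + F * (ρ / 4)) / 2 * ‖x - z‖ ≤ w x / 2 := calc
    _ ≤ ((d + 1) * (4 * w x) / (ρ / 4) + F * (ρ / 4)) / 2 * (ρ / (32 * (d + 1))) := by gcongr
    _ = w x / 4 + F * ρ ^ 2 / (256 * (d + 1)) := by field_simp; ring
    _ ≤ w x / 4 + w x / (256 * 1) := by gcongr; linarith
    _ ≤ w x / 2 := by linarith
  linarith

theorem mul_sq_le_of_laplacian_le_neg {u w : E → ℝ} {x₀ : E} {R M F : ℝ} (hd : 2 < finrank ℝ E)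
    (hR : 0 ≤ R) (huC2 : ∀ z ∈ closedBall x₀ R, ContDiffAt ℝ 2 u z)
    (hwC2 : ∀ z ∈ closedBall x₀ R, ContDiffAt ℝ 2 w z)
    (hu : ∀ z ∈ closedBall x₀ R, u z ∈ Set.Icc 0 M) (hw : ∀ z ∈ closedBall x₀ R, 0 ≤ w z)
    (hΔu : ∀ z ∈ closedBall x₀ R, Δ u z ≤ -w z) (hΔw : ∀ z ∈ closedBall x₀ R, |Δ w z| ≤ F) :
    w x₀ * R ^ 2 ≤ F * R ^ 4 + 4 * finrank ℝ E * (32 * (finrank ℝ E + 1)) ^ 2 * M := by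
  set d := (finrank ℝ E : ℝ)
  have : Nontrivial E := nontrivial_of_finrank_pos (R := ℝ) (by lia)
  have hd0 : 0 < d := Nat.cast_pos.2 finrank_pos
  obtain ⟨x₁, ρ, ⟨hρ, hρR⟩, hsub, hle, hw4⟩ := exists_closedBall_le_four_mul hR
    (fun z hz ↦ (hwC2 z hz).continuousAt.continuousWithinAt) hw
  have hx₁ : x₁ ∈ closedBall x₀ R := hsub (mem_closedBall_self hρ)
  have hF : 0 ≤ F := (abs_nonneg _).trans (hΔw x₁ hx₁)
  have hM : 0 ≤ M := (hu x₁ hx₁).1.trans (hu x₁ hx₁).2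
  refine hle.trans ?_
  rcases le_total (w x₁) (F * ρ ^ 2) with hsmall | hlarge
  · calc w x₁ * ρ ^ 2 ≤ F * ρ ^ 2 * ρ ^ 2 := by gcongr
      _ = F * ρ ^ 4 := by ring
      _ ≤ F * R ^ 4 := by gcongr
      _ ≤ F * R ^ 4 + 4 * d * (32 * (d + 1)) ^ 2 * M := le_add_of_nonneg_right (by positivity)
  rcases hρ.eq_or_lt with rfl | hρpos
  · simp only [ne_eq, OfNat.ofNat_ne_zero, not_false_eq_true, zero_pow, mul_zero]
    positivity
  set r := ρ / (32 * (d + 1))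
  have hr : closedBall x₁ r ⊆ closedBall x₀ R :=
    (closedBall_subset_closedBall (div_le_self hρ (by linarith))).trans hsub
  have hhalf := half_le_of_abs_laplacian_le hd (fun z hz ↦ hwC2 z (hsub hz))
    (fun z hz ↦ hw z (hsub hz)) hw4 (fun z hz ↦ hΔw z (hsub hz)) hρpos hlarge
  have htorsion : w x₁ / 2 * r ^ 2 / (2 * d) ≤ M :=
    (le_of_laplacian_le_neg (by positivity) (fun z hz ↦ huC2 z (hr hz))
      (fun z hz ↦ (hu z (hr hz)).1)
      fun z hz ↦ (hΔu z (hr hz)).trans (neg_le_neg (hhalf z hz))).trans (hu x₁ hx₁).2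
  calc w x₁ * ρ ^ 2 = 4 * d * (32 * (d + 1)) ^ 2 * (w x₁ / 2 * r ^ 2 / (2 * d)) := by
        simp only [r]; field_simp; ring
    _ ≤ 4 * d * (32 * (d + 1)) ^ 2 * M := by gcongr
    _ ≤ F * R ^ 4 + 4 * d * (32 * (d + 1)) ^ 2 * M := le_add_of_nonneg_left (by positivity)

end LaplacianEstimate

section LogarithmicBarriers

/-- The function `t ^ a * (log t⁻¹) ^ b`, whose powers of the logarithm are real and positive only
for `0 < t < 1`. -/
noncomputable def powerLog (a b t : ℝ) : ℝ := t ^ a * (-Real.log t) ^ b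

lemma powerLog_pos (a b : ℝ) {t : ℝ} (ht : t ∈ Set.Ioo 0 1) : 0 < powerLog a b t :=
  mul_pos (Real.rpow_pos_of_pos ht.1 a)
    (Real.rpow_pos_of_pos (neg_pos.2 (Real.log_neg ht.1 ht.2)) b)

lemma powerLog_sub_one (a b : ℝ) {t : ℝ} (ht : t ∈ Set.Ioo 0 1) :
    powerLog a (b - 1) t = powerLog a b t / -Real.log t := by
  rw [powerLog, powerLog, Real.rpow_sub_one (neg_pos.2 (Real.log_neg ht.1 ht.2)).ne', mul_div_assoc]

lemma rpow_mul_powerLog (a a' b : ℝ) {t : ℝ} (ht : 0 < t) :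
    t ^ a * powerLog a' b t = powerLog (a + a') b t := by
  rw [powerLog, powerLog, Real.rpow_add ht, mul_assoc]

lemma neg_log_rpow_mul_powerLog (a b b' : ℝ) {t : ℝ} (ht : t ∈ Set.Ioo 0 1) :
    (-Real.log t) ^ b * powerLog a b' t = powerLog a (b + b') t := by
  rw [powerLog, powerLog, Real.rpow_add (neg_pos.2 (Real.log_neg ht.1 ht.2)), mul_left_comm]

lemma hasDerivAt_powerLog (a b : ℝ) {t : ℝ} (ht : t ∈ Set.Ioo 0 1) :
    HasDerivAt (powerLog a b) (a * powerLog (a - 1) b t - b * powerLog (a - 1) (b - 1) t) t := by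
  have hlog : 0 < -Real.log t := neg_pos.2 (Real.log_neg ht.1 ht.2)
  have h := (Real.hasDerivAt_rpow_const (p := a) (.inl ht.1.ne')).mul
    ((Real.hasDerivAt_log ht.1.ne').neg.rpow_const (p := b) (.inl hlog.ne'))
  refine h.congr_deriv ?_
  simp only [powerLog, Pi.neg_apply, Real.rpow_sub_one ht.1.ne', Real.rpow_sub_one hlog.ne']
  field_simp
  ring

variable {E : Type*} [NormedAddCommGroup E]

lemma tendsto_neg_log_norm : Tendsto (fun x : E ↦ -Real.log ‖x‖) (𝓝[≠] 0) atTop :=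
  tendsto_neg_atBot_atTop.comp (Real.tendsto_log_nhdsGT_zero.comp tendsto_norm_nhdsNE_zero)

lemma eventually_norm_mem_Ioo : ∀ᶠ x : E in 𝓝[≠] 0, ‖x‖ ∈ Set.Ioo (0 : ℝ) 1 :=
  tendsto_norm_nhdsNE_zero.eventually (Ioo_mem_nhdsGT one_pos)

variable [InnerProductSpace ℝ E]

lemma contDiffAt_powerLog_norm (a b : ℝ) {x : E} (hx : ‖x‖ ∈ Set.Ioo 0 1) {k : WithTop ℕ∞} :
    ContDiffAt ℝ k (fun y : E ↦ powerLog a b ‖y‖) x :=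
  have hx₀ : x ≠ 0 := norm_pos_iff.1 hx.1
  (contDiffAt_norm_rpow a hx₀).mul (((contDiffAt_norm ℝ hx₀).log hx.1.ne').neg.rpow_const_of_ne
    (neg_pos.2 (Real.log_neg hx.1 hx.2)).ne')

variable [FiniteDimensional ℝ E]

lemma laplacian_powerLog_norm (a b : ℝ) {x : E} (hx : ‖x‖ ∈ Set.Ioo 0 1) :
    Δ (fun y : E ↦ powerLog a b ‖y‖) x = powerLog (a - 2) b ‖x‖ *
      (a * (a + finrank ℝ E - 2) - b * (2 * a + finrank ℝ E - 2) * (-Real.log ‖x‖)⁻¹ +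
        b * (b - 1) * (-Real.log ‖x‖)⁻¹ ^ 2) := by
  have hF : ∀ᶠ t in 𝓝 ‖x‖, HasDerivAt (powerLog a b)
      (a * powerLog (a - 1) b t - b * powerLog (a - 1) (b - 1) t) t :=
    mem_of_superset (Ioo_mem_nhds hx.1 hx.2) fun t ↦ hasDerivAt_powerLog a b
  have hF' := ((hasDerivAt_powerLog (a - 1) b hx).const_mul a).sub
    ((hasDerivAt_powerLog (a - 1) (b - 1) hx).const_mul b)
  have hpow (b : ℝ) : powerLog (a - 1) b ‖x‖ = ‖x‖ * powerLog (a - 2) b ‖x‖ := by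
    rw [powerLog, powerLog, show a - 1 = a - 2 + 1 by ring, Real.rpow_add_one hx.1.ne']
    ring
  rw [laplacian_comp_norm (norm_pos_iff.1 hx.1) hF hF', show a - 1 - 1 = a - 2 by ring, hpow, hpow]
  simp only [powerLog_sub_one _ _ hx]
  have hx₀ := hx.1.ne'
  have hlog := (Real.log_neg hx.1 hx.2).ne
  field_simp
  ring

theorem eventually_isStrictSupersolutionAt_powerLog {V : E → ℝ} {β μ c : ℝ}
    (hμ : 0 < μ) (hμd : μ < 2 * (finrank ℝ E - 4))
    (hc : c < μ * β * (finrank ℝ E - 2))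
    (hV : ∀ᶠ x in 𝓝[≠] 0, ‖x‖ ^ 4 * -Real.log ‖x‖ * V x ≤ c) :
    ∀ᶠ x : E in 𝓝[≠] 0, IsStrictSupersolutionAt V
      (fun y ↦ powerLog (4 - finrank ℝ E) (-β) ‖y‖)
      (fun y ↦ μ * powerLog (2 - finrank ℝ E) (-β) ‖y‖) x := by
  set d := (finrank ℝ E : ℝ)
  have hinv : Tendsto (fun x : E ↦ (-Real.log ‖x‖)⁻¹) (𝓝[≠] 0) (𝓝 0) :=
    tendsto_inv_atTop_zero.comp tendsto_neg_log_norm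
  have hfst : ∀ᶠ x : E in 𝓝[≠] 0, (4 - d) * 2 + β * (6 - d) * (-Real.log ‖x‖)⁻¹ +
      β * (β + 1) * (-Real.log ‖x‖)⁻¹ ^ 2 < -μ := by
    refine Tendsto.eventually_lt_const (v := (4 - d) * 2) (by linarith) ?_
    simpa using (((hinv.const_mul _).const_add _).add ((hinv.pow 2).const_mul _))
  have hsnd : ∀ᶠ x : E in 𝓝[≠] 0, c < μ * β * (d - 2) - μ * β * (β + 1) * (-Real.log ‖x‖)⁻¹ := by
    refine Tendsto.eventually_const_lt hc ?_
    simpa using (hinv.const_mul (μ * β * (β + 1))).const_sub (μ * β * (d - 2))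
  filter_upwards [hfst, hsnd, hV, eventually_norm_mem_Ioo] with x hfst hsnd hV hx
  have hψ : ContDiffAt ℝ 2 (fun y : E ↦ powerLog (2 - d) (-β) ‖y‖) x :=
    contDiffAt_powerLog_norm _ _ hx
  have hlog : 0 < -Real.log ‖x‖ := neg_pos.2 (Real.log_neg hx.1 hx.2)
  refine ⟨contDiffAt_powerLog_norm _ _ hx, contDiffAt_const.mul hψ, powerLog_pos _ _ hx,
    mul_pos hμ (powerLog_pos _ _ hx), ?_, ?_⟩
  · rw [laplacian_powerLog_norm _ _ hx, show 4 - d - 2 = 2 - d by ring]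
    nlinarith [powerLog_pos (2 - d) (-β) hx]
  · have hpow : powerLog (4 - d) (-β) ‖x‖ = ‖x‖ ^ 4 * powerLog (-d) (-β) ‖x‖ := by
      rw [sub_eq_add_neg, ← rpow_mul_powerLog _ _ _ hx.1]
      norm_cast
    have hVx : V x * ‖x‖ ^ 4 ≤ c * (-Real.log ‖x‖)⁻¹ := by
      rw [← div_eq_mul_inv, le_div_iff₀ hlog]
      linarith
    have hsnd' : c * (-Real.log ‖x‖)⁻¹ <
        (μ * β * (d - 2) - μ * β * (β + 1) * (-Real.log ‖x‖)⁻¹) * (-Real.log ‖x‖)⁻¹ := by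
      gcongr
    rw [laplacian_const_mul hψ, laplacian_powerLog_norm _ _ hx, hpow,
      show 2 - d - 2 = -d by ring]
    nlinarith [powerLog_pos (-d) (-β) hx]

theorem eventually_isStrictSupersolutionAt_norm_rpow {V : E → ℝ} {ε : ℝ} (hε : 0 < ε)
    (hεd : ε < finrank ℝ E - 4) (hV : Tendsto (fun x ↦ ‖x‖ ^ 4 * V x) (𝓝[≠] 0) (𝓝 0)) :
    ∀ᶠ x : E in 𝓝[≠] 0, IsStrictSupersolutionAt V (fun y ↦ ‖y‖ ^ (-ε))
      (fun y ↦ ε * (finrank ℝ E - 2 - ε) / 2 * ‖y‖ ^ (-ε - 2)) x := by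
  set d := (finrank ℝ E : ℝ)
  have hcoeff : 0 < ε * (d - 2 - ε) := mul_pos hε (by linarith)
  have hcoeff' : 0 < ε * (d - 2 - ε) / 2 * ((ε + 2) * (d - 4 - ε)) :=
    mul_pos (half_pos hcoeff) (mul_pos (by linarith) (by linarith))
  filter_upwards [hV.eventually_lt_const hcoeff', self_mem_nhdsWithin] with x hVx hx
  have hpos (a : ℝ) : 0 < ‖x‖ ^ a := Real.rpow_pos_of_pos (norm_pos_iff.2 hx) a
  have hΨ : ContDiffAt ℝ 2 (fun y : E ↦ ‖y‖ ^ (-ε - 2)) x := contDiffAt_norm_rpow _ hx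
  refine ⟨contDiffAt_norm_rpow _ hx, contDiffAt_const.mul hΨ, hpos _,
    mul_pos (half_pos hcoeff) (hpos _), ?_, ?_⟩
  · rw [laplacian_norm_rpow _ hx]
    linarith [mul_pos hcoeff (hpos (-ε - 2))]
  · have hpow : ‖x‖ ^ (-ε) = ‖x‖ ^ 4 * ‖x‖ ^ (-ε - 2 - 2) := by
      rw [← Real.rpow_natCast, ← Real.rpow_add (norm_pos_iff.2 hx)]
      congr 1
      push_cast
      ring
    rw [laplacian_const_mul hΨ, laplacian_norm_rpow _ hx, hpow]
    linarith [mul_lt_mul_of_pos_right hVx (hpos (-ε - 2 - 2))]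

end LogarithmicBarriers

section IsolatedSingularities

variable {E : Type*} [NormedAddCommGroup E]

lemma isLittleO_norm_rpow_norm_rpow {a b : ℝ} (hba : b < a) :
    (fun x : E ↦ ‖x‖ ^ a) =o[𝓝[≠] 0] fun x ↦ ‖x‖ ^ b := by
  have hlim : Tendsto (fun x : E ↦ ‖x‖ ^ (a - b)) (𝓝[≠] 0) (𝓝 0) :=
    ((continuous_norm.rpow_const fun _ ↦ .inr (sub_pos.2 hba).le).tendsto' 0 0
      (by simp [(sub_pos.2 hba).ne'])).mono_left nhdsWithin_le_nhds
  refine (((isLittleO_one_iff ℝ).2 hlim).mul_isBigO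
    (isBigO_refl (fun x ↦ ‖x‖ ^ b) _)).congr' ?_ (.of_forall fun x ↦ one_mul _)
  filter_upwards [self_mem_nhdsWithin] with x hx
  rw [← Real.rpow_add (norm_pos_iff.2 hx), sub_add_cancel]

lemma half_norm_le_norm_of_mem_closedBall {x y : E} (hy : y ∈ closedBall x (‖x‖ / 2)) :
    ‖x‖ / 2 ≤ ‖y‖ := by
  linarith [norm_sub_norm_le x y, mem_closedBall_iff_norm'.1 hy]

lemma norm_le_of_mem_closedBall_half_norm {x y : E} (hy : y ∈ closedBall x (‖x‖ / 2)) :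
    ‖y‖ ≤ 3 / 2 * ‖x‖ := by
  linarith [norm_le_norm_add_norm_sub' y x, mem_closedBall_iff_norm.1 hy]

lemma eventually_forall_mem_closedBall_sdiff {p : E → Prop} (h : ∀ᶠ x in 𝓝[≠] 0, p x) :
    ∀ᶠ r in 𝓝[>] (0 : ℝ), ∀ x ∈ closedBall (0 : E) r \ {0}, p x := by
  filter_upwards [eventually_forall_norm_sub_le h] with r hr x hx
  exact hr x hx.2 (mem_closedBall_iff_norm.1 hx.1)

lemma eventually_forall_mem_closedBall_half_norm {p : E → Prop} (h : ∀ᶠ x in 𝓝[≠] 0, p x) :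
    ∀ᶠ x in 𝓝[≠] 0, ∀ y ∈ closedBall x (‖x‖ / 2), p y := by
  obtain ⟨r, hp, hr⟩ := ((eventually_forall_norm_sub_le h).and eventually_mem_nhdsWithin).exists
  have hsmall : ∀ᶠ x : E in 𝓝[≠] 0, 3 / 2 * ‖x‖ < r :=
    (Continuous.tendsto' (by fun_prop) 0 0 (by simp)).mono_left nhdsWithin_le_nhds
      |>.eventually_lt_const hr
  filter_upwards [hsmall, self_mem_nhdsWithin] with x hxr hx y hy
  have hx₀ : 0 < ‖x‖ := norm_pos_iff.2 hx
  refine hp y (norm_pos_iff.1 (by linarith [half_norm_le_norm_of_mem_closedBall hy])) ?_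
  rw [sub_zero]
  linarith [norm_le_of_mem_closedBall_half_norm hy]

lemma eventually_powerLog_norm_le {a b : ℝ} (ha : a ≤ 0) (hb : b ≤ 0) :
    ∀ᶠ x : E in 𝓝[≠] 0, ∀ y ∈ closedBall x (‖x‖ / 2),
      powerLog a b ‖y‖ ≤ 2⁻¹ ^ (a + b) * powerLog a b ‖x‖ := by
  filter_upwards [tendsto_neg_log_norm.eventually_gt_atTop (2 * Real.log (3 / 2)),
    eventually_norm_mem_Ioo] with x hlog hx y hy
  have hx₀ : 0 < ‖x‖ / 2 := half_pos hx.1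
  have hy₀ : 0 < ‖y‖ := hx₀.trans_le (half_norm_le_norm_of_mem_closedBall hy)
  have hlogx : 0 < -Real.log ‖x‖ := neg_pos.2 (Real.log_neg hx.1 hx.2)
  have hlogy : 2⁻¹ * -Real.log ‖x‖ ≤ -Real.log ‖y‖ := by
    have h := Real.log_le_log hy₀ (norm_le_of_mem_closedBall_half_norm hy)
    rw [Real.log_mul (by norm_num) hx.1.ne'] at h
    linarith
  calc powerLog a b ‖y‖ ≤ (2⁻¹ * ‖x‖) ^ a * (2⁻¹ * -Real.log ‖x‖) ^ b := by
        refine mul_le_mul (Real.rpow_le_rpow_of_nonpos (mul_pos (by norm_num) hx.1) ?_ ha)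
          (Real.rpow_le_rpow_of_nonpos (mul_pos (by norm_num) hlogx) hlogy hb)
          (Real.rpow_nonneg (le_trans (by positivity) hlogy) b) (by positivity)
        linarith [half_norm_le_norm_of_mem_closedBall hy]
    _ = 2⁻¹ ^ (a + b) * powerLog a b ‖x‖ := by
      rw [Real.mul_rpow (by positivity) hx.1.le, Real.mul_rpow (by positivity) hlogx.le,
        Real.rpow_add (by positivity), powerLog]
      ring

variable [InnerProductSpace ℝ E] [FiniteDimensional ℝ E]

/-- `u` is nonnegative and superharmonic at `x` and satisfies there the differential inequality
`|Δ²u| ≤ V u` with a nonnegative potential `V`. -/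
structure IsBiharmonicSubsolutionAt (V u : E → ℝ) (x : E) : Prop where
  contDiffAt : ContDiffAt ℝ 4 u x
  nonneg : 0 ≤ u x
  laplacian_nonpos : Δ u x ≤ 0
  potential_nonneg : 0 ≤ V x
  abs_laplacian_laplacian_le : |Δ (Δ u) x| ≤ V x * u x

namespace IsBiharmonicSubsolutionAt

variable {V u : E → ℝ} {x : E}

lemma contDiffAt_laplacian (h : IsBiharmonicSubsolutionAt V u x) : ContDiffAt ℝ 2 (Δ u) x :=
  RemovableSingularity.contDiffAt_laplacian h.contDiffAt (by norm_num)

lemma isSubsolutionAt (h : IsBiharmonicSubsolutionAt V u x) :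
    IsSubsolutionAt V u (-Δ u) x where
  contDiffAt_fst := h.contDiffAt.of_le (by norm_num)
  contDiffAt_snd := h.contDiffAt_laplacian.neg
  neg_le_laplacian_fst := (neg_neg _).le
  neg_le_laplacian_snd := by
    rw [laplacian_neg]
    exact neg_le_neg ((le_abs_self _).trans h.abs_laplacian_laplacian_le)

lemma sum {ι : Type*} [Fintype ι] {U : ι → E → ℝ} (hV : 0 ≤ V x)
    (h : ∀ i, IsBiharmonicSubsolutionAt V (U i) x) :
    IsBiharmonicSubsolutionAt V (fun y ↦ ∑ i, U i y) x := by
  have hΔ : Δ (fun y ↦ ∑ i, U i y) =ᶠ[𝓝 x] fun y ↦ ∑ i, Δ (U i) y := by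
    filter_upwards [eventually_all.2 fun i ↦ (h i).contDiffAt.eventually (by simp)] with y hy
    exact laplacian_finset_sum fun i _ ↦ (hy i).of_le (by norm_num)
  refine ⟨ContDiffAt.sum fun i _ ↦ (h i).contDiffAt, Finset.sum_nonneg fun i _ ↦ (h i).nonneg,
    hΔ.self_of_nhds.trans_le (Finset.sum_nonpos fun i _ ↦ (h i).laplacian_nonpos), hV, ?_⟩
  rw [(laplacian_congr_nhds hΔ).self_of_nhds,
    laplacian_finset_sum fun i _ ↦ (h i).contDiffAt_laplacian, Finset.mul_sum]
  exact (Finset.abs_sum_le_sum_abs _ _).trans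
    (Finset.sum_le_sum fun i _ ↦ (h i).abs_laplacian_laplacian_le)

end IsBiharmonicSubsolutionAt

lemma norm_sq_mul_abs_laplacian_le {V u : E → ℝ} {x : E} {c M : ℝ} (hd : 2 < finrank ℝ E)
    (hx : x ≠ 0) (hu : ∀ y ∈ closedBall x (‖x‖ / 2), IsBiharmonicSubsolutionAt V u y)
    (hV : ∀ y ∈ closedBall x (‖x‖ / 2), ‖y‖ ^ 4 * V y ≤ c)
    (hM : ∀ y ∈ closedBall x (‖x‖ / 2), u y ≤ M) :
    ‖x‖ ^ 2 * |Δ u x| ≤ 4 * (c + 4 * finrank ℝ E * (32 * (finrank ℝ E + 1)) ^ 2) * M := by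
  have hx₀ : 0 < ‖x‖ := norm_pos_iff.2 hx
  have hxmem : x ∈ closedBall x (‖x‖ / 2) := mem_closedBall_self (by positivity)
  have hc : 0 ≤ c := (mul_nonneg (by positivity) (hu x hxmem).potential_nonneg).trans (hV x hxmem)
  have hbilap (y) (hy : y ∈ closedBall x (‖x‖ / 2)) : |Δ (Δ u) y| ≤ c / (‖x‖ / 2) ^ 4 * M := by
    have hVy : V y ≤ c / (‖x‖ / 2) ^ 4 := by
      rw [le_div_iff₀' (by positivity)]
      refine le_trans ?_ (hV y hy)
      gcongr
      exacts [(hu y hy).potential_nonneg, half_norm_le_norm_of_mem_closedBall hy]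
    exact (hu y hy).abs_laplacian_laplacian_le.trans
      (mul_le_mul hVy (hM y hy) (hu y hy).nonneg (by positivity))
  have hest := mul_sq_le_of_laplacian_le_neg (w := -Δ u) hd (half_pos hx₀).le
    (fun y hy ↦ (hu y hy).isSubsolutionAt.contDiffAt_fst)
    (fun y hy ↦ (hu y hy).isSubsolutionAt.contDiffAt_snd)
    (fun y hy ↦ ⟨(hu y hy).nonneg, hM y hy⟩)
    (fun y hy ↦ neg_nonneg.2 (hu y hy).laplacian_nonpos) (fun y _ ↦ (neg_neg _).ge)
    (fun y hy ↦ by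
      rw [laplacian_neg, Pi.neg_apply, abs_neg]
      exact hbilap y hy)
  rw [abs_of_nonpos (hu x hxmem).laplacian_nonpos]
  rw [Pi.neg_apply] at hest
  have : c / (‖x‖ / 2) ^ 4 * M * (‖x‖ / 2) ^ 4 = c * M := by field_simp
  linarith

theorem isLittleO_norm_sq_mul_laplacian {V u φ : E → ℝ} {c C : ℝ} (hd : 2 < finrank ℝ E)
    (hu : ∀ᶠ x in 𝓝[≠] 0, IsBiharmonicSubsolutionAt V u x)
    (hV : ∀ᶠ x in 𝓝[≠] 0, ‖x‖ ^ 4 * V x ≤ c)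
    (hφ : ∀ᶠ x in 𝓝[≠] 0, ∀ y ∈ closedBall x (‖x‖ / 2), ‖φ y‖ ≤ C * ‖φ x‖)
    (huφ : u =o[𝓝[≠] 0] φ) : (fun x ↦ ‖x‖ ^ 2 * Δ u x) =o[𝓝[≠] 0] φ := by
  set B := 4 * (c + 4 * finrank ℝ E * (32 * (finrank ℝ E + 1)) ^ 2)
  have hbound {δ : ℝ} (hδ : 0 < δ) :
      ∀ᶠ x in 𝓝[≠] 0, ‖‖x‖ ^ 2 * Δ u x‖ ≤ δ * (B * C) * ‖φ x‖ := by
    filter_upwards [eventually_forall_mem_closedBall_half_norm hu,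
      eventually_forall_mem_closedBall_half_norm hV, hφ,
      eventually_forall_mem_closedBall_half_norm (huφ.def hδ), self_mem_nhdsWithin]
      with x hu hV hφ huφ hx
    rw [norm_mul, norm_pow, norm_norm]
    refine (norm_sq_mul_abs_laplacian_le (M := δ * (C * ‖φ x‖)) hd hx hu hV fun y hy ↦ ?_).trans_eq
      (by ring)
    exact (le_abs_self _).trans ((huφ y hy).trans (by gcongr; exact hφ y hy))
  refine isLittleO_iff.2 fun δ hδ ↦ ?_
  filter_upwards [hbound (δ := δ / (|B * C| + 1)) (by positivity)] with x hx
  refine hx.trans ?_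
  gcongr
  rw [div_mul_eq_mul_div, div_le_iff₀ (by positivity)]
  gcongr
  linarith [le_abs_self (B * C)]

lemma IsSubsolutionAt.exists_forall_le_mul {V u w Φ Ψ : E → ℝ} {S : Set E} (hS : IsCompact S)
    (hsub : ∀ x ∈ S, IsSubsolutionAt V u w x) (hsup : ∀ x ∈ S, IsStrictSupersolutionAt V Φ Ψ x) :
    ∃ K > 0, ∀ x ∈ S, u x ≤ K * Φ x ∧ w x ≤ K * Ψ x := by
  obtain ⟨K₁, hK₁⟩ := hS.exists_bound_of_continuousOn (f := fun x ↦ u x / Φ x) fun x hx ↦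
    ((hsub x hx).contDiffAt_fst.continuousAt.div₀ (hsup x hx).contDiffAt_fst.continuousAt
      (hsup x hx).fst_pos.ne').continuousWithinAt
  obtain ⟨K₂, hK₂⟩ := hS.exists_bound_of_continuousOn (f := fun x ↦ w x / Ψ x) fun x hx ↦
    ((hsub x hx).contDiffAt_snd.continuousAt.div₀ (hsup x hx).contDiffAt_snd.continuousAt
      (hsup x hx).snd_pos.ne').continuousWithinAt
  refine ⟨max (max K₁ K₂) 1, by positivity, fun x hx ↦ ⟨(div_le_iff₀ (hsup x hx).fst_pos).1 ?_,
    (div_le_iff₀ (hsup x hx).snd_pos).1 ?_⟩⟩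
  · exact (le_abs_self _).trans ((hK₁ x hx).trans (by simp))
  · exact (le_abs_self _).trans ((hK₂ x hx).trans (by simp))

theorem IsSubsolutionAt.le_of_isLittleO_of_le_on_sphere {V u w φ ψ Φ Ψ : E → ℝ} {r : ℝ}
    (hV : ∀ x ∈ closedBall 0 r \ {0}, 0 ≤ V x)
    (hsub : ∀ x ∈ closedBall 0 r \ {0}, IsSubsolutionAt V u w x)
    (hφψ : ∀ x ∈ closedBall 0 r \ {0}, IsStrictSupersolutionAt V φ ψ x)
    (hΦΨ : ∀ x ∈ closedBall 0 r \ {0}, IsStrictSupersolutionAt V Φ Ψ x)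
    (hu : u =o[𝓝[≠] 0] φ) (hw : w =o[𝓝[≠] 0] ψ)
    (hsphere : ∀ x ∈ sphere 0 r, u x ≤ Φ x ∧ w x ≤ Ψ x) :
    ∀ x ∈ closedBall 0 r \ {0}, u x ≤ Φ x ∧ w x ≤ Ψ x := by
  intro x hx
  suffices hle : ∀ δ > 0, u x ≤ δ * φ x + Φ x ∧ w x ≤ δ * ψ x + Ψ x from
    ⟨le_of_forall_pos_le_mul_add fun δ hδ ↦ (hle δ hδ).1,
      le_of_forall_pos_le_mul_add fun δ hδ ↦ (hle δ hδ).2⟩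
  intro δ hδ
  obtain ⟨ρ, hρ, hρ₀, hρx⟩ := ((eventually_forall_norm_sub_le ((hu.def hδ).and (hw.def hδ))).and
    (Ioo_mem_nhdsGT (norm_pos_iff.2 hx.2))).exists
  have hA : closedBall (0 : E) r \ ball 0 ρ ⊆ closedBall 0 r \ {0} :=
    Set.sdiff_subset_sdiff_right (Set.singleton_subset_iff.2 (mem_ball_self hρ₀))
  have hcompact : IsCompact (closedBall (0 : E) r \ ball 0 ρ) :=
    (isCompact_closedBall 0 r).diff isOpen_ball
  refine IsSubsolutionAt.le_of_le_on_frontier hcompact (fun y hy ↦ hV y (hA hy))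
    (fun y hy ↦ hsub y (hA hy))
    (fun y hy ↦ ((hφψ y (hA hy)).const_mul hδ).add (hΦΨ y (hA hy))) (fun y hy ↦ ?_)
    x ⟨hx.1, by simpa using hρx.le⟩
  have hyA := hA (hcompact.isClosed.frontier_subset hy)
  have hφ := (hφψ y hyA).fst_pos
  have hψ := (hφψ y hyA).snd_pos
  rcases frontier_sdiff_subset _ _ hy with hyr | hyρ
  · have hyΦΨ := hsphere y (frontier_closedBall_subset_sphere hyr)
    exact ⟨hyΦΨ.1.trans (le_add_of_nonneg_left (mul_pos hδ hφ).le),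
      hyΦΨ.2.trans (le_add_of_nonneg_left (mul_pos hδ hψ).le)⟩
  · obtain ⟨huy, hwy⟩ := hρ y hyA.2 (by simpa using closure_ball_subset_closedBall hyρ)
    rw [Real.norm_of_nonneg hφ.le] at huy
    rw [Real.norm_of_nonneg hψ.le] at hwy
    exact ⟨(le_abs_self _).trans (huy.trans (le_add_of_nonneg_right (hΦΨ y hyA).fst_pos.le)),
      (le_abs_self _).trans (hwy.trans (le_add_of_nonneg_right (hΦΨ y hyA).snd_pos.le))⟩

theorem IsSubsolutionAt.exists_eventually_le_mul_of_isLittleO {V u w φ ψ Φ Ψ : E → ℝ}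
    (hV : ∀ᶠ x in 𝓝[≠] 0, 0 ≤ V x) (hsub : ∀ᶠ x in 𝓝[≠] 0, IsSubsolutionAt V u w x)
    (hφψ : ∀ᶠ x in 𝓝[≠] 0, IsStrictSupersolutionAt V φ ψ x)
    (hΦΨ : ∀ᶠ x in 𝓝[≠] 0, IsStrictSupersolutionAt V Φ Ψ x)
    (hu : u =o[𝓝[≠] 0] φ) (hw : w =o[𝓝[≠] 0] ψ) :
    ∃ K, ∀ᶠ x in 𝓝[≠] 0, u x ≤ K * Φ x ∧ w x ≤ K * Ψ x := by
  obtain ⟨r, hr, hr₀⟩ := (eventually_forall_mem_closedBall_sdiff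
    (hV.and (hsub.and (hφψ.and hΦΨ)))).and eventually_mem_nhdsWithin |>.exists
  have hsphere : sphere (0 : E) r ⊆ closedBall 0 r \ {0} := fun x hx ↦
    ⟨sphere_subset_closedBall hx, ne_of_mem_sphere hx (ne_of_gt hr₀)⟩
  obtain ⟨K, hK, hle⟩ := IsSubsolutionAt.exists_forall_le_mul (isCompact_sphere (0 : E) r)
    (fun x hx ↦ (hr x (hsphere hx)).2.1) (fun x hx ↦ (hr x (hsphere hx)).2.2.2)
  refine ⟨K, ?_⟩
  filter_upwards [tendsto_norm_nhdsNE_zero.eventually (Ioc_mem_nhdsGT hr₀)] with x hx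
  exact IsSubsolutionAt.le_of_isLittleO_of_le_on_sphere (fun x hx ↦ (hr x hx).1)
    (fun x hx ↦ (hr x hx).2.1) (fun x hx ↦ (hr x hx).2.2.1)
    (fun x hx ↦ (hr x hx).2.2.2.const_mul hK) hu hw hle x
    ⟨mem_closedBall_zero_iff.2 hx.2, norm_pos_iff.1 hx.1⟩

theorem exists_eventually_le_of_laplacian_nonneg {v : E → ℝ} (hd : 2 < finrank ℝ E)
    (hC2 : ∀ᶠ x in 𝓝[≠] 0, ContDiffAt ℝ 2 v x) (hΔ : ∀ᶠ x in 𝓝[≠] 0, 0 ≤ Δ v x)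
    (hv : v =o[𝓝[≠] 0] fun x ↦ ‖x‖ ^ (2 - finrank ℝ E : ℝ)) : ∃ M, ∀ᶠ x in 𝓝[≠] 0, v x ≤ M := by
  have : Nontrivial E := nontrivial_of_finrank_pos (R := ℝ) (by lia)
  obtain ⟨r, hr, hr₀⟩ := (eventually_forall_mem_closedBall_sdiff (hC2.and hΔ)).and
    eventually_mem_nhdsWithin |>.exists
  obtain ⟨N, hN⟩ := (isCompact_sphere (0 : E) r).exists_bound_of_continuousOn (f := v)
    fun x hx ↦ (hr x ⟨sphere_subset_closedBall hx, ne_of_mem_sphere hx (ne_of_gt hr₀)⟩).1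
      |>.continuousAt.continuousWithinAt
  have hK : closedBall (0 : E) r \ ({0} : Finset E) = closedBall 0 r \ {0} := by simp
  have hint : interior (closedBall (0 : E) r) \ ({0} : Finset E) ⊆ closedBall 0 r \ {0} :=
    hK ▸ Set.sdiff_subset_sdiff_left interior_subset
  have hle := nonpos_of_laplacian_nonneg_off_poles (S := {0}) (q := fun x ↦ v x - |N|)
    (isCompact_closedBall 0 r)
    (hK ▸ fun x hx ↦ ((hr x hx).1.sub contDiffAt_const).continuousAt.continuousWithinAt)
    (fun x hx ↦ (hr x (hint hx)).1.sub contDiffAt_const)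
    (fun x hx ↦ by
      have hsub := (hr x (hint hx)).1.laplacian_sub (contDiffAt_const (c := |N|))
      rw [laplacian_const, Pi.zero_apply, sub_zero] at hsub
      exact (hr x (hint hx)).2.trans_eq hsub.symm)
    (fun s hs δ hδ ↦ by
      rw [Finset.mem_singleton.1 hs, hK]
      filter_upwards [(hv.def hδ).filter_mono
        (nhdsWithin_mono 0 fun x (hx : x ∈ closedBall 0 r \ {0}) ↦ hx.2)] with x hx
      rw [Real.norm_of_nonneg (Real.rpow_nonneg (norm_nonneg x) _)] at hx
      rw [sub_zero]
      linarith [Real.le_norm_self (v x), abs_nonneg N])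
    (fun x hx ↦ sub_nonpos.2 ((le_abs_self _).trans
      ((hN x (frontier_closedBall_subset_sphere hx.1)).trans (le_abs_self N))))
  refine ⟨|N|, ?_⟩
  filter_upwards [tendsto_norm_nhdsNE_zero.eventually (Ioc_mem_nhdsGT hr₀)] with x hx
  exact sub_nonpos.1 (hle x (hK ▸ ⟨mem_closedBall_zero_iff.2 hx.2, norm_pos_iff.1 hx.1⟩))

theorem exists_eventually_le_of_neg_rpow_le_laplacian {v : E → ℝ} {θ C : ℝ}
    (hd : 2 < finrank ℝ E) (hθ : 0 < θ) (hC2 : ∀ᶠ x in 𝓝[≠] 0, ContDiffAt ℝ 2 v x)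
    (hΔ : ∀ᶠ x in 𝓝[≠] 0, -(C * ‖x‖ ^ (θ - 2)) ≤ Δ v x)
    (hv : v =o[𝓝[≠] 0] fun x ↦ ‖x‖ ^ (2 - finrank ℝ E : ℝ)) :
    ∃ M, ∀ᶠ x in 𝓝[≠] 0, v x ≤ M := by
  have hd' : (2 : ℝ) < finrank ℝ E := mod_cast hd
  have hcoeff : 0 < θ * (θ + finrank ℝ E - 2) := mul_pos hθ (by linarith)
  set A := |C| / (θ * (θ + finrank ℝ E - 2))
  obtain ⟨M, hM⟩ := exists_eventually_le_of_laplacian_nonneg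
    (v := fun x ↦ v x + A * ‖x‖ ^ θ) hd
    (by
      filter_upwards [hC2, self_mem_nhdsWithin] with x hC2 hx
      exact hC2.add (contDiffAt_const.mul (contDiffAt_norm_rpow θ hx)))
    (by
      filter_upwards [hC2, hΔ, self_mem_nhdsWithin] with x hC2 hΔ hx
      rw [laplacian_add_const_mul hC2 (contDiffAt_norm_rpow θ hx), laplacian_norm_rpow θ hx,
        ← mul_assoc, div_mul_cancel₀ _ hcoeff.ne']
      have : C * ‖x‖ ^ (θ - 2) ≤ |C| * ‖x‖ ^ (θ - 2) := by gcongr; exact le_abs_self C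
      linarith)
    (hv.add ((isLittleO_norm_rpow_norm_rpow (by linarith)).const_mul_left A))
  refine ⟨M, hM.mono fun x hx ↦ le_trans (le_add_of_nonneg_right ?_) hx⟩
  positivity

end IsolatedSingularities

section CriticalDecay

lemma powerLog_rpow (a b c : ℝ) {t : ℝ} (ht : t ∈ Set.Ioo 0 1) :
    powerLog a b t ^ c = powerLog (a * c) (b * c) t := by
  have hlog : 0 < -Real.log t := neg_pos.2 (Real.log_neg ht.1 ht.2)
  rw [powerLog, powerLog, Real.mul_rpow (Real.rpow_nonneg ht.1.le a) (Real.rpow_nonneg hlog.le b),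
    ← Real.rpow_mul ht.1.le, ← Real.rpow_mul hlog.le]

lemma powerLog_four_one (t : ℝ) : powerLog 4 1 t = t ^ 4 * -Real.log t := by
  rw [powerLog, Real.rpow_one]
  norm_cast

variable {E : Type*} [NormedAddCommGroup E]

lemma tendsto_norm_pow_four_mul_neg_log_norm :
    Tendsto (fun x : E ↦ ‖x‖ ^ 4 * -Real.log ‖x‖) (𝓝[≠] 0) (𝓝 0) := by
  have h := (tendsto_log_mul_rpow_nhdsGT_zero (r := 4) (by norm_num)).neg.comp
    (tendsto_norm_nhdsNE_zero (E := E))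
  rw [neg_zero] at h
  refine h.congr fun x ↦ ?_
  simp only [Function.comp_apply]
  norm_cast
  ring

lemma isLittleO_powerLog_norm_powerLog_norm {a b b' : ℝ} (hb : b < b') :
    (fun x : E ↦ powerLog a b ‖x‖) =o[𝓝[≠] 0] fun x ↦ powerLog a b' ‖x‖ := by
  have hlim : Tendsto (fun x : E ↦ (-Real.log ‖x‖) ^ (-(b' - b))) (𝓝[≠] 0) (𝓝 0) :=
    (tendsto_rpow_neg_atTop (sub_pos.2 hb)).comp tendsto_neg_log_norm
  refine (((isLittleO_one_iff ℝ).2 hlim).mul_isBigO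
    (isBigO_refl (fun x ↦ powerLog a b' ‖x‖) _)).congr' ?_ (.of_forall fun x ↦ one_mul _)
  filter_upwards [eventually_norm_mem_Ioo] with x hx
  rw [neg_log_rpow_mul_powerLog _ _ _ hx, neg_sub, sub_add_cancel]

lemma isLittleO_powerLog_norm {N : E → ℝ} {q γ β c : ℝ} (hq : 0 < q) (hqγ : q⁻¹ ≤ γ) (hβγ : β < γ)
    (hN : ∀ᶠ x in 𝓝[≠] 0, 0 ≤ N x)
    (hNc : ∀ᶠ x in 𝓝[≠] 0, ‖x‖ ^ 4 * -Real.log ‖x‖ * N x ^ q ≤ c) :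
    N =o[𝓝[≠] 0] fun x ↦ powerLog (-4 * γ) (-β) ‖x‖ := by
  refine IsBigO.trans_isLittleO (IsBigO.of_bound (c ^ q⁻¹) ?_)
    (isLittleO_powerLog_norm_powerLog_norm (neg_lt_neg hβγ))
  filter_upwards [hN, hNc, eventually_norm_mem_Ioo,
    tendsto_norm_pow_four_mul_neg_log_norm.eventually_le_const one_pos] with x hN hNc hx hy
  rw [← powerLog_four_one] at hNc hy
  have hy₀ := powerLog_pos 4 1 hx
  have hc : 0 ≤ c := le_trans (by positivity) hNc
  rw [Real.norm_of_nonneg hN, Real.norm_of_nonneg (powerLog_pos _ _ hx).le]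
  calc N x ≤ (c * (powerLog 4 1 ‖x‖)⁻¹) ^ q⁻¹ := by
        rw [Real.le_rpow_inv_iff_of_pos hN (by positivity) hq, ← div_eq_mul_inv, le_div_iff₀' hy₀]
        exact hNc
    _ = c ^ q⁻¹ * (powerLog 4 1 ‖x‖)⁻¹ ^ q⁻¹ := Real.mul_rpow hc (by positivity)
    _ ≤ c ^ q⁻¹ * (powerLog 4 1 ‖x‖)⁻¹ ^ γ := by
      gcongr
      exact (one_le_inv₀ hy₀).2 hy
    _ = c ^ q⁻¹ * powerLog (-4 * γ) (-γ) ‖x‖ := by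
      rw [Real.inv_rpow hy₀.le, ← Real.rpow_neg hy₀.le, powerLog_rpow _ _ _ hx]
      ring_nf

lemma tendsto_norm_pow_four_mul {V : E → ℝ} {c : ℝ} (hV₀ : ∀ᶠ x in 𝓝[≠] 0, 0 ≤ V x)
    (hV : ∀ᶠ x in 𝓝[≠] 0, ‖x‖ ^ 4 * -Real.log ‖x‖ * V x ≤ c) :
    Tendsto (fun x ↦ ‖x‖ ^ 4 * V x) (𝓝[≠] 0) (𝓝 0) := by
  refine squeeze_zero' (hV₀.mono fun x hx ↦ by positivity) ?_
    (tendsto_neg_log_norm.const_div_atTop c)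
  filter_upwards [hV, tendsto_neg_log_norm.eventually_gt_atTop 0] with x hV hlog
  rw [le_div_iff₀ hlog]
  linarith

variable [InnerProductSpace ℝ E] [FiniteDimensional ℝ E]

lemma isLittleO_laplacian_powerLog {V u : E → ℝ} {a b c : ℝ} (hd : 2 < finrank ℝ E) (ha : a ≤ 0)
    (hb : b ≤ 0) (hu : ∀ᶠ x in 𝓝[≠] 0, IsBiharmonicSubsolutionAt V u x)
    (hV : ∀ᶠ x in 𝓝[≠] 0, ‖x‖ ^ 4 * V x ≤ c)
    (hua : u =o[𝓝[≠] 0] fun x ↦ powerLog a b ‖x‖) :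
    Δ u =o[𝓝[≠] 0] fun x ↦ powerLog (a - 2) b ‖x‖ := by
  have hdoubling : ∀ᶠ x : E in 𝓝[≠] 0, ∀ y ∈ closedBall x (‖x‖ / 2),
      ‖powerLog a b ‖y‖‖ ≤ 2⁻¹ ^ (a + b) * ‖powerLog a b ‖x‖‖ := by
    filter_upwards [eventually_powerLog_norm_le ha hb, eventually_norm_mem_Ioo,
      eventually_forall_mem_closedBall_half_norm eventually_norm_mem_Ioo] with x hle hx hy y hyx
    rw [Real.norm_of_nonneg (powerLog_pos a b hx).le,
      Real.norm_of_nonneg (powerLog_pos a b (hy y hyx)).le]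
    exact hle y hyx
  refine ((isBigO_refl (fun x : E ↦ ‖x‖ ^ (-2 : ℝ)) _).mul_isLittleO
    (isLittleO_norm_sq_mul_laplacian hd hu hV hdoubling hua)).congr' ?_ ?_ <;>
    filter_upwards [eventually_norm_mem_Ioo] with x hx
  · rw [Real.rpow_neg hx.1.le, Real.rpow_two, inv_mul_cancel_left₀ (pow_pos hx.1 2).ne']
  · rw [rpow_mul_powerLog _ _ _ hx.1, neg_add_eq_sub]

theorem isBigO_norm_rpow_neg {V u : E → ℝ} {β c ε : ℝ} (hβ : 0 < β)
    (hε : 0 < ε) (hεd : ε < finrank ℝ E - 4)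
    (hu : ∀ᶠ x in 𝓝[≠] 0, IsBiharmonicSubsolutionAt V u x)
    (hc : c < 2 * β * (finrank ℝ E - 2) * (finrank ℝ E - 4))
    (hV : ∀ᶠ x in 𝓝[≠] 0, ‖x‖ ^ 4 * -Real.log ‖x‖ * V x ≤ c)
    (huβ : u =o[𝓝[≠] 0] fun x ↦ powerLog (4 - finrank ℝ E) (-β) ‖x‖) :
    (u =O[𝓝[≠] 0] fun x ↦ ‖x‖ ^ (-ε)) ∧ Δ u =O[𝓝[≠] 0] fun x ↦ ‖x‖ ^ (-ε - 2) := by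
  have hd : (2 : ℝ) < finrank ℝ E := by linarith
  have hcoeff : 0 < β * (finrank ℝ E - 2) := mul_pos hβ (sub_pos.2 hd)
  obtain ⟨μ, hμc, hμd⟩ : ∃ μ, max 0 (c / (β * (finrank ℝ E - 2))) < μ ∧ μ < 2 * (finrank ℝ E - 4) :=
    exists_between (max_lt (by linarith) ((div_lt_iff₀ hcoeff).2 (by linarith)))
  have hμ : 0 < μ := (le_max_left _ _).trans_lt hμc
  have hV₀ : ∀ᶠ x in 𝓝[≠] 0, 0 ≤ V x := hu.mono fun x hx ↦ hx.potential_nonneg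
  have hV4 := tendsto_norm_pow_four_mul hV₀ hV
  have hΔu := isLittleO_laplacian_powerLog (by exact_mod_cast hd)
    (by linarith) (neg_nonpos.2 hβ.le) hu (hV4.eventually_le_const one_pos) huβ
  have hcμ : c < μ * β * (finrank ℝ E - 2) := by
    have := (div_lt_iff₀ hcoeff).1 ((le_max_right _ _).trans_lt hμc)
    linarith
  obtain ⟨K, hK⟩ := IsSubsolutionAt.exists_eventually_le_mul_of_isLittleO hV₀
    (hu.mono fun x hx ↦ hx.isSubsolutionAt)
    (eventually_isStrictSupersolutionAt_powerLog hμ hμd hcμ hV)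
    (eventually_isStrictSupersolutionAt_norm_rpow hε hεd hV4) huβ
    (by
      rw [show (4 : ℝ) - finrank ℝ E - 2 = 2 - finrank ℝ E by ring] at hΔu
      exact ((isLittleO_const_mul_right_iff hμ.ne').2 hΔu).neg_left)
  constructor
  · refine IsBigO.of_bound K ?_
    filter_upwards [hK, hu] with x hK hu
    rw [Real.norm_of_nonneg hu.nonneg, Real.norm_of_nonneg (by positivity)]
    exact hK.1
  · refine IsBigO.of_bound (K * (ε * (finrank ℝ E - 2 - ε) / 2)) ?_
    filter_upwards [hK, hu] with x hK hu
    rw [Real.norm_of_nonpos hu.laplacian_nonpos, Real.norm_of_nonneg (by positivity), mul_assoc]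
    exact hK.2

end CriticalDecay

section Bootstrap

variable {E : Type*} [NormedAddCommGroup E] [InnerProductSpace ℝ E] [FiniteDimensional ℝ E]

lemma isBigO_one_of_neg_rpow_le_laplacian {v : E → ℝ} {θ C : ℝ} (hd : 2 < finrank ℝ E)
    (hθ : 0 < θ) (hC2 : ∀ᶠ x in 𝓝[≠] 0, ContDiffAt ℝ 2 v x) (hv₀ : ∀ᶠ x in 𝓝[≠] 0, 0 ≤ v x)
    (hΔ : ∀ᶠ x in 𝓝[≠] 0, -(C * ‖x‖ ^ (θ - 2)) ≤ Δ v x)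
    (hv : v =o[𝓝[≠] 0] fun x ↦ ‖x‖ ^ (2 - finrank ℝ E : ℝ)) :
    v =O[𝓝[≠] 0] fun _ ↦ (1 : ℝ) := by
  obtain ⟨M, hM⟩ := exists_eventually_le_of_neg_rpow_le_laplacian hd hθ hC2 hΔ hv
  refine IsBigO.of_bound M ?_
  filter_upwards [hM, hv₀] with x hM hv₀
  rwa [Real.norm_of_nonneg hv₀, norm_one, mul_one]

lemma mul_le_rpow_of_le_rpow_sub_one {a s t : ℝ} (hs : 0 < s) (ht : 0 ≤ t)
    (ha : a ≤ t ^ (s - 1)) : a * t ≤ t ^ s := by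
  rcases ht.eq_or_lt with rfl | ht
  · rw [mul_zero, Real.zero_rpow hs.ne']
  · calc a * t ≤ t ^ (s - 1) * t := by gcongr
      _ = t ^ s := by rw [← Real.rpow_add_one ht.ne', sub_add_cancel]

-- Since `ε * s < 1`, the right-hand side of `|Δ²u| ≤ u ^ s` is `O(‖x‖⁻¹)`, which is mild enough to
-- bound `Δu`, and a bounded `Δu` in turn bounds `u`.
lemma isBigO_one_of_isBigO_norm_rpow_neg {V u : E → ℝ} {ε s : ℝ} (hs : 0 < s)
    (hεd : ε < finrank ℝ E - 4) (hε : 0 < ε) (hεs : ε * s < 1)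
    (hu : ∀ᶠ x in 𝓝[≠] 0, IsBiharmonicSubsolutionAt V u x)
    (hVu : ∀ᶠ x in 𝓝[≠] 0, V x ≤ u x ^ (s - 1))
    (huε : u =O[𝓝[≠] 0] fun x ↦ ‖x‖ ^ (-ε)) (hΔuε : Δ u =O[𝓝[≠] 0] fun x ↦ ‖x‖ ^ (-ε - 2)) :
    (u =O[𝓝[≠] 0] fun _ ↦ (1 : ℝ)) ∧ Δ u =O[𝓝[≠] 0] fun _ ↦ (1 : ℝ) := by
  have hd : 2 < finrank ℝ E := by exact_mod_cast (by linarith : (2 : ℝ) < finrank ℝ E)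
  have hus : (fun x ↦ u x ^ s) =O[𝓝[≠] 0] fun x ↦ ‖x‖ ^ (-1 : ℝ) := by
    refine (huε.rpow hs.le (.of_forall fun x ↦ by positivity)).trans ?_
    simp only [← Real.rpow_mul (norm_nonneg _)]
    exact (isLittleO_norm_rpow_norm_rpow (by linarith)).isBigO
  obtain ⟨C, hC⟩ := hus.bound
  have hΔu : Δ u =O[𝓝[≠] 0] fun _ ↦ (1 : ℝ) := by
    refine isBigO_neg_left.1 (isBigO_one_of_neg_rpow_le_laplacian (v := -Δ u) (C := C) hd one_pos
      (hu.mono fun x hx ↦ hx.contDiffAt_laplacian.neg)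
      (hu.mono fun x hx ↦ neg_nonneg.2 hx.laplacian_nonpos) ?_
      (hΔuε.trans_isLittleO (isLittleO_norm_rpow_norm_rpow (by linarith))).neg_left)
    filter_upwards [hC, hu, hVu] with x hC hu hVu
    rw [Real.norm_of_nonneg (Real.rpow_nonneg hu.nonneg s), Real.norm_of_nonneg (by positivity)]
      at hC
    rw [show (1 - 2 : ℝ) = -1 by norm_num]
    exact (neg_le_neg ((mul_le_rpow_of_le_rpow_sub_one hs hu.nonneg hVu).trans hC)).trans
      hu.isSubsolutionAt.neg_le_laplacian_snd
  refine ⟨?_, hΔu⟩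
  obtain ⟨M, hM⟩ := hΔu.bound
  refine isBigO_one_of_neg_rpow_le_laplacian (C := M) hd two_pos
    (hu.mono fun x hx ↦ hx.contDiffAt.of_le (by norm_num)) (hu.mono fun x hx ↦ hx.nonneg) ?_
    (huε.trans_isLittleO (isLittleO_norm_rpow_norm_rpow (by linarith)))
  filter_upwards [hM] with x hM
  rw [sub_self, Real.rpow_zero]
  rw [norm_one] at hM
  exact neg_le_of_abs_le hM

theorem isBigO_one_of_isLittleO_powerLog {V u : E → ℝ} {β c s : ℝ} (hd : 4 < finrank ℝ E)
    (hβ : 0 < β) (hs : 0 < s) (hu : ∀ᶠ x in 𝓝[≠] 0, IsBiharmonicSubsolutionAt V u x)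
    (hc : c < 2 * β * (finrank ℝ E - 2) * (finrank ℝ E - 4))
    (hV : ∀ᶠ x in 𝓝[≠] 0, ‖x‖ ^ 4 * -Real.log ‖x‖ * V x ≤ c)
    (hVu : ∀ᶠ x in 𝓝[≠] 0, V x ≤ u x ^ (s - 1))
    (huβ : u =o[𝓝[≠] 0] fun x ↦ powerLog (4 - finrank ℝ E) (-β) ‖x‖) :
    (u =O[𝓝[≠] 0] fun _ ↦ (1 : ℝ)) ∧ Δ u =O[𝓝[≠] 0] fun _ ↦ (1 : ℝ) := by
  have hd' : (4 : ℝ) < finrank ℝ E := mod_cast hd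
  obtain ⟨ε, hε, hεds⟩ : ∃ ε, 0 < ε ∧ ε < min (finrank ℝ E - 4 : ℝ) (1 / s) :=
    exists_between (lt_min (sub_pos.2 hd') (one_div_pos.2 hs))
  obtain ⟨hεd, hεs⟩ := lt_min_iff.1 hεds
  obtain ⟨huε, hΔuε⟩ := isBigO_norm_rpow_neg hβ hε hεd hu hc hV huβ
  exact isBigO_one_of_isBigO_norm_rpow_neg hs hεd hε ((lt_div_iff₀ hs).1 hεs) hu hVu huε hΔuε

theorem exists_tendsto_of_laplacian_isBigO_one {v : E → ℝ} (hd : 2 < finrank ℝ E)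
    (hC2 : ∀ᶠ x in 𝓝[≠] 0, ContDiffAt ℝ 2 v x) (hv₀ : ∀ᶠ x in 𝓝[≠] 0, 0 ≤ v x)
    (hv : v =O[𝓝[≠] 0] fun _ ↦ (1 : ℝ)) (hΔ : Δ v =O[𝓝[≠] 0] fun _ ↦ (1 : ℝ)) :
    ∃ l, Tendsto v (𝓝[≠] 0) (𝓝 l) := by
  obtain ⟨N, hN⟩ := hv.bound
  obtain ⟨F, hF⟩ := hΔ.bound
  obtain ⟨r, hr, hr₀⟩ := (eventually_forall_mem_closedBall_sdiff
    (hC2.and (hv₀.and (hN.and hF)))).and eventually_mem_nhdsWithin |>.exists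
  rw [Set.mem_Ioi] at hr₀
  simp only [norm_one, mul_one] at hr
  have hsub {x y : E} (hx : x ∈ closedBall 0 (r / 2) \ {0}) (hy : y ∈ closedBall 0 (r / 2) \ {0}) :
      ∀ z ∈ closedBall (midpoint ℝ x y) (r / 2) \ ({0} : Finset E), z ∈ closedBall 0 r \ {0} := by
    rintro z ⟨hz, hz₀⟩
    have hmid : midpoint ℝ x y ∈ closedBall 0 (r / 2) :=
      (convex_closedBall 0 _).midpoint_mem hx.1 hy.1
    exact ⟨closedBall_subset_closedBall' (by linarith [mem_closedBall.1 hmid]) hz,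
      by simpa using hz₀⟩
  obtain ⟨g, hg, hvg⟩ := (LipschitzOnWith.of_le_add_mul' (f := v) (s := closedBall 0 (r / 2) \ {0})
    (((finrank ℝ E + 1) * N / (r / 2) + F * (r / 2)) / 2) fun x hx y hy ↦ by
      have h := sub_le_of_abs_laplacian_le (S := {0}) hd (half_pos hr₀)
        (fun z hz ↦ (hr z (hsub hx hy z hz)).1)
        (fun z hz ↦ ⟨(hr z (hsub hx hy z hz)).2.1,
          (le_abs_self _).trans (hr z (hsub hx hy z hz)).2.2.1⟩)
        (fun z hz ↦ (hr z (hsub hx hy z hz)).2.2.2) (by simpa using hx.2) (by simpa using hy.2)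
        ((norm_sub_le x y).trans
          (by linarith [mem_closedBall_zero_iff.1 hx.1, mem_closedBall_zero_iff.1 hy.1]))
      rw [dist_eq_norm]
      linarith).extend_real
  refine ⟨g 0, ((hg.continuous.tendsto 0).mono_left nhdsWithin_le_nhds).congr' ?_⟩
  filter_upwards [tendsto_norm_nhdsNE_zero.eventually (Ioc_mem_nhdsGT (half_pos hr₀))] with x hx
  exact (hvg ⟨mem_closedBall_zero_iff.2 hx.2, norm_pos_iff.1 hx.1⟩).symm

theorem exists_tendsto_of_isLittleO_powerLog {ι : Type*} [Fintype ι] {V : E → ℝ} {U : ι → E → ℝ}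
    {β c s : ℝ} (hd : 4 < finrank ℝ E) (hβ : 0 < β) (hs : 0 < s)
    (hU : ∀ᶠ x in 𝓝[≠] 0, ∀ i, IsBiharmonicSubsolutionAt V (U i) x)
    (hc : c < 2 * β * (finrank ℝ E - 2) * (finrank ℝ E - 4))
    (hV : ∀ᶠ x in 𝓝[≠] 0, ‖x‖ ^ 4 * -Real.log ‖x‖ * V x ≤ c)
    (hVU : ∀ᶠ x in 𝓝[≠] 0, V x ≤ (∑ i, U i x) ^ (s - 1))
    (hUβ : (fun x ↦ ∑ i, U i x) =o[𝓝[≠] 0] fun x ↦ powerLog (4 - finrank ℝ E) (-β) ‖x‖) (i : ι) :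
    ∃ l, Tendsto (U i) (𝓝[≠] 0) (𝓝 l) := by
  obtain ⟨hu, hΔu⟩ := isBigO_one_of_isLittleO_powerLog hd hβ hs
    (hU.mono fun x hx ↦ IsBiharmonicSubsolutionAt.sum (hx i).potential_nonneg hx) hc hV hVU hUβ
  refine exists_tendsto_of_laplacian_isBigO_one (by lia)
    (hU.mono fun x hx ↦ (hx i).contDiffAt.of_le (by norm_num)) (hU.mono fun x hx ↦ (hx i).nonneg)
    (IsBigO.trans (.of_bound' ?_) hu) (IsBigO.trans (.of_bound' ?_) hΔu) <;>
    filter_upwards [hU] with x hU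
  · rw [Real.norm_of_nonneg (hU i).nonneg]
    exact (Finset.single_le_sum (f := fun j ↦ U j x) (fun j _ ↦ (hU j).nonneg)
      (Finset.mem_univ i)).trans (le_abs_self _)
  · rw [laplacian_finset_sum fun j _ ↦ (hU j).contDiffAt.of_le (by norm_num),
      Real.norm_of_nonpos (hU i).laplacian_nonpos]
    refine le_trans ?_ (neg_le_abs _)
    rw [← Finset.sum_neg_distrib]
    exact Finset.single_le_sum (f := fun j ↦ -Δ (U j) x)
      (fun j _ ↦ neg_nonneg.2 (hU j).laplacian_nonpos) (Finset.mem_univ i)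

end Bootstrap

section PMaps

lemma tendsto_norm_pow_four_mul_rpow {E : Type*} [NormedAddCommGroup E] {N : E → ℝ} {a q : ℝ}
    (hq : 0 < q) (haq : a * q = 4) (hN : ∀ x, 0 ≤ N x)
    (h : Tendsto (fun x ↦ ‖x‖ ^ a * (-Real.log ‖x‖) ^ (a / 4) * N x) (𝓝[≠] 0) (𝓝 0)) :
    Tendsto (fun x ↦ ‖x‖ ^ 4 * -Real.log ‖x‖ * N x ^ q) (𝓝[≠] 0) (𝓝 0) := by
  have hpow := h.rpow_const (.inr hq.le)
  rw [Real.zero_rpow hq.ne'] at hpow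
  refine hpow.congr' ?_
  filter_upwards [eventually_norm_mem_Ioo] with x hx
  rw [← powerLog, Real.mul_rpow (powerLog_pos _ _ hx).le (hN x), powerLog_rpow _ _ _ hx, haq,
    show a / 4 * q = 1 by linarith, powerLog_four_one]

lemma eventually_norm_pow_four_mul_rpow_le {n : ℕ} {N : EuclideanSpace ℝ (Fin n) → ℝ}
    {s c : ℝ} (hn : 4 < n) (hc : 0 < c) (hs : s = (n : ℝ) / (n - 4)) (hN : ∀ x, 0 ≤ N x)
    (h : Tendsto (fun x ↦ ‖x‖ ^ ((n : ℝ) - 4) * (-Real.log ‖x‖) ^ (((n : ℝ) - 4) / 4) * N x)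
      (𝓝[ball 0 1 \ {0}] 0) (𝓝 0)) :
    ∀ᶠ x in 𝓝[≠] 0, ‖x‖ ^ 4 * -Real.log ‖x‖ * N x ^ (s - 1) ≤ c := by
  have hn4 : 0 < (n : ℝ) - 4 := sub_pos.2 (mod_cast hn)
  have hs1 : s - 1 = 4 / (n - 4) := by rw [hs, div_sub_one hn4.ne', sub_sub_cancel]
  have hnhds : 𝓝[ball 0 1 \ {0}] (0 : EuclideanSpace ℝ (Fin n)) = 𝓝[≠] 0 :=
    nhdsWithin_inter_of_mem (mem_nhdsWithin_of_mem_nhds (ball_mem_nhds 0 one_pos))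
  exact hs1 ▸ (tendsto_norm_pow_four_mul_rpow (div_pos four_pos hn4)
    (mul_div_cancel₀ 4 hn4.ne') hN (hnhds ▸ h)).eventually_le_const hc

variable {n p : ℕ} {U : Fin p → EuclideanSpace ℝ (Fin n) → ℝ} {x : EuclideanSpace ℝ (Fin n)}

lemma le_vnorm (i : Fin p) : U i x ≤ vnorm U x :=
  Real.le_sqrt_of_sq_le
    (Finset.single_le_sum (f := fun i ↦ U i x ^ 2) (fun _ _ ↦ sq_nonneg _) (Finset.mem_univ i))

lemma vnorm_le_sum (hU : ∀ i, 0 ≤ U i x) : vnorm U x ≤ ∑ i, U i x :=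
  Real.sqrt_le_iff.2 ⟨Finset.sum_nonneg fun i _ ↦ hU i,
    Finset.sum_sq_le_sq_sum_of_nonneg fun i _ ↦ hU i⟩

lemma sum_isBigO_vnorm {l : Filter (EuclideanSpace ℝ (Fin n))} (hU : ∀ᶠ x in l, ∀ i, 0 ≤ U i x) :
    (fun x ↦ ∑ i, U i x) =O[l] vnorm U := by
  refine IsBigO.fun_sum fun i _ ↦ IsBigO.of_bound' (hU.mono fun x hU ↦ ?_)
  rw [Real.norm_of_nonneg (hU i)]
  exact (le_vnorm i).trans (le_abs_self _)

lemma isBiharmonicSubsolutionAt_of_abs_bilap_le {V u : EuclideanSpace ℝ (Fin n) → ℝ}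
    (hC4 : ContDiffAt ℝ 4 u x) (hu : 0 ≤ u x) (hsuper : 0 ≤ -lap u x) (hV : 0 ≤ V x)
    (hbilap : |bilap u x| ≤ V x * u x) : IsBiharmonicSubsolutionAt V u x where
  contDiffAt := hC4
  nonneg := hu
  laplacian_nonpos := by
    rw [← lap_eq_laplacian (hC4.of_le (by norm_num))]
    exact neg_nonneg.1 hsuper
  potential_nonneg := hV
  abs_laplacian_laplacian_le := by rwa [← bilap_eq_laplacian_laplacian hC4]

theorem exists_tendsto_of_norm_pow_four_mul_vnorm_rpow_le {s c : ℝ} (hn : 4 < n)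
    (hs : (n : ℝ) / (n - 4) ≤ s)
    (hU : ∀ᶠ x in 𝓝[≠] 0, ∀ i, IsBiharmonicSubsolutionAt (fun x ↦ vnorm U x ^ (s - 1)) (U i) x)
    (hc : c < (n - 2) * (n - 4) ^ 2 / 2)
    (hUc : ∀ᶠ x in 𝓝[≠] 0, ‖x‖ ^ 4 * -Real.log ‖x‖ * vnorm U x ^ (s - 1) ≤ c) (i : Fin p) :
    ∃ l, Tendsto (U i) (𝓝[≠] 0) (𝓝 l) := by
  have hn' : (4 : ℝ) < n := mod_cast hn
  have hn4 : 0 < (n : ℝ) - 4 := sub_pos.2 hn'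
  have hq : 4 / ((n : ℝ) - 4) ≤ s - 1 := by
    rw [le_sub_iff_add_le, div_add_one hn4.ne', add_sub_cancel]
    exact hs
  have hq₀ : 0 < s - 1 := (div_pos four_pos hn4).trans_le hq
  have hcoeff : 0 < 2 * ((n : ℝ) - 2) * (n - 4) := mul_pos (by linarith) hn4
  obtain ⟨β, hβ, hβn⟩ : ∃ β, max 0 (c / (2 * (n - 2) * (n - 4))) < β ∧ β < ((n : ℝ) - 4) / 4 :=
    exists_between (max_lt (by linarith) ((div_lt_iff₀ hcoeff).2 (by linarith)))
  obtain ⟨hβ₀, hβc⟩ := max_lt_iff.1 hβ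
  have hU₀ : ∀ᶠ x in 𝓝[≠] 0, ∀ i, 0 ≤ U i x := hU.mono fun x hx i ↦ (hx i).nonneg
  have hUβ : vnorm U =o[𝓝[≠] 0] fun x ↦ powerLog (-4 * ((n - 4) / 4)) (-β) ‖x‖ :=
    isLittleO_powerLog_norm hq₀ (inv_div (4 : ℝ) (n - 4) ▸ inv_anti₀ (div_pos four_pos hn4) hq) hβn
      (.of_forall fun _ ↦ Real.sqrt_nonneg _) hUc
  rw [show -4 * (((n : ℝ) - 4) / 4) = 4 - n by ring] at hUβ
  refine exists_tendsto_of_isLittleO_powerLog (β := β) (c := c) (s := s) ?_ hβ₀ (by linarith) hU ?_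
    hUc (hU₀.mono fun x hx ↦ Real.rpow_le_rpow (Real.sqrt_nonneg _) (vnorm_le_sum hx) hq₀.le)
    ?_ i <;> rw [finrank_euclideanSpace_fin]
  · exact hn
  · linarith [(div_lt_iff₀ hcoeff).1 hβc]
  · exact (sum_isBigO_vnorm hU₀).trans_isLittleO hUβ

end PMaps

end RemovableSingularity

open RemovableSingularity in
theorem statement19_general {n p : ℕ} (hn : 5 ≤ n) {s c : ℝ} (hs : (n : ℝ) / (n - 4) ≤ s)
    (hc : c < (n - 2) * (n - 4) ^ 2 / 2) (U : Fin p → EuclideanSpace ℝ (Fin n) → ℝ)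
    (hnonneg : ∀ i, ∀ x ∈ ball 0 1 \ {0}, 0 ≤ U i x)
    (hC4 : ∀ i, ContDiffOn ℝ 4 (U i) (ball 0 1 \ {0}))
    (hsuper : ∀ i, ∀ x ∈ ball 0 1 \ {0}, 0 ≤ -lap (U i) x)
    (hbilap : ∀ i, ∀ x ∈ ball 0 1 \ {0}, |bilap (U i) x| ≤ vnorm U x ^ (s - 1) * U i x)
    (hdecay : ∀ᶠ x in 𝓝[≠] 0, ‖x‖ ^ 4 * -Real.log ‖x‖ * vnorm U x ^ (s - 1) ≤ c) :
    ∀ i, ∃ g : EuclideanSpace ℝ (Fin n) → ℝ, ContinuousOn g (ball 0 1) ∧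
      ∀ x ∈ ball 0 1 \ {0}, g x = U i x := by
  intro i
  have hU : ∀ᶠ x in 𝓝[≠] 0,
      ∀ i, IsBiharmonicSubsolutionAt (fun x ↦ vnorm U x ^ (s - 1)) (U i) x := by
    filter_upwards [sdiff_mem_nhdsWithin_compl (ball_mem_nhds 0 one_pos) {0}] with x hx i
    exact isBiharmonicSubsolutionAt_of_abs_bilap_le
      ((hC4 i).contDiffAt ((isOpen_ball.sdiff isClosed_singleton).mem_nhds hx)) (hnonneg i x hx)
      (hsuper i x hx) (Real.rpow_nonneg (Real.sqrt_nonneg _) _) (hbilap i x hx)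
  obtain ⟨l, hl⟩ := exists_tendsto_of_norm_pow_four_mul_vnorm_rpow_le hn hs hU hc hdecay i
  exact ⟨Function.update (U i) 0 l,
    continuousOn_update_iff.2 ⟨(hC4 i).continuousOn,
      fun _ ↦ hl.mono_left (nhdsWithin_mono 0 fun x hx ↦ hx.2)⟩,
    fun x hx ↦ Function.update_of_ne hx.2 _ _⟩

/-- removability of the singularity at the Serrin exponent
`s = n/(n-4)` when `|U(x)| = o(|x|^{4-n} (-ln|x|)^{(4-n)/4})` as `x → 0`. -/
theorem statement19 (n p : ℕ) (hn : 5 ≤ n) (hp : 1 ≤ p) (s : ℝ)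
    (hs : s = (n : ℝ) / ((n : ℝ) - 4))
    (U : Fin p → EuclideanSpace ℝ (Fin n) → ℝ)
    (hnonneg : ∀ i, ∀ x ∈ Metric.ball (0 : EuclideanSpace ℝ (Fin n)) 1 \ {0}, 0 ≤ U i x)
    (hC4 : ∀ i, ContDiffOn ℝ 4 (U i)
      (Metric.ball (0 : EuclideanSpace ℝ (Fin n)) 1 \ {0}))
    (hsuper : ∀ i, ∀ x ∈ Metric.ball (0 : EuclideanSpace ℝ (Fin n)) 1 \ {0},
      0 < -lap (U i) x)
    (hpde : ∀ i, ∀ x ∈ Metric.ball (0 : EuclideanSpace ℝ (Fin n)) 1 \ {0},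
      bilap (U i) x = (vnorm U x) ^ (s - 1) * U i x)
    (hlittleo : Tendsto
      (fun x : EuclideanSpace ℝ (Fin n) =>
        ‖x‖ ^ ((n : ℝ) - 4) * (-Real.log ‖x‖) ^ (((n : ℝ) - 4) / 4) * vnorm U x)
      (𝓝[Metric.ball (0 : EuclideanSpace ℝ (Fin n)) 1 \ {0}] 0) (𝓝 0)) :
    ∀ i, ∃ g : EuclideanSpace ℝ (Fin n) → ℝ,
      ContinuousOn g (Metric.ball (0 : EuclideanSpace ℝ (Fin n)) 1) ∧
      ∀ x ∈ Metric.ball (0 : EuclideanSpace ℝ (Fin n)) 1 \ {0}, g x = U i x := by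
  have hn' : (5 : ℝ) ≤ n := mod_cast hn
  exact statement19_general hn hs.ge (c := 1) (by nlinarith) U hnonneg hC4
    (fun i x hx ↦ (hsuper i x hx).le)
    (fun i x hx ↦ (hpde i x hx).symm ▸ (abs_of_nonneg (mul_nonneg
      (Real.rpow_nonneg (Real.sqrt_nonneg _) _) (hnonneg i x hx))).le)
    (RemovableSingularity.eventually_norm_pow_four_mul_rpow_le hn one_pos hs
      (fun _ ↦ Real.sqrt_nonneg _) hlittleo)
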